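/- Tracked charged curves obey the Lorentz force law (flat-space version of the Corollary to the Lorentz-force theorem): under the hypotheses of the charged tracking theorem—F : ℝ⁴ → Matrix (Fin 4) (Fin 4) ℝ smooth with antisymmetric values; γ : ℝ → ℝ⁴ smooth with η(γ'(t), γ'(t)) = 1 and γ'(t) future timelike for all t; κ ≥ 0; 𝒞 a collection of pairs (T, J) of smooth fields with T symmetric-valued satisfying the dominant energy condition everywhere, Σₐ ∂J a/∂p a = 0, Σ_b ∂T a b/∂p b (p) = Σ_b (E * F(p)) a b * J(p) b for all p and a, and |Σₐ J(p) a * t a| ≤ κ * Σₐ Σ_b T(p) a b * t a * t b for every p and every unit timelike t; and {T : (T,J) ∈ 𝒞} tracks γ—there exists a real κ' with |κ'| ≤ κ such that for every t ∈ ℝ and every index a, γ''(t) a = κ' * Σ_b (E * F(γ(t))) a b * γ'(t) b. -/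

import Mathlib

open Matrix MeasureTheory Filter Topology

noncomputable section

abbrev Vec4 : Type := Fin 4 → ℝ
abbrev Mat4 : Type := Matrix (Fin 4) (Fin 4) ℝ

/-- The Minkowski inner product on ℝ⁴. -/
def mink (x y : Vec4) : ℝ := x 0 * y 0 - x 1 * y 1 - x 2 * y 2 - x 3 * y 3

/-- The matrix diag(1,-1,-1,-1). -/
def E : Mat4 := Matrix.diagonal ![1, -1, -1, -1]

def FutureCausal (x : Vec4) : Prop := 0 ≤ mink x x ∧ 0 ≤ x 0
def FutureTimelike (x : Vec4) : Prop := 0 < mink x x ∧ 0 < x 0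
def FutureNull (x : Vec4) : Prop := x ≠ 0 ∧ mink x x = 0 ∧ 0 < x 0
def UnitTimelike (x : Vec4) : Prop := FutureTimelike x ∧ mink x x = 1

/-- The dominant energy condition for a matrix. -/
def DEC (T : Mat4) : Prop :=
  ∀ ξ ζ : Vec4, FutureCausal ξ → FutureCausal ζ → 0 ≤ ∑ i, ∑ j, ξ i * T i j * ζ j

/-- ⟨T, x⟩ = Σᵢⱼ T i j * x i j. -/
def minner (T x : Mat4) : ℝ := ∑ i, ∑ j, T i j * x i j

/-- The cone D of finite sums of symmetrized products of future causal vectors. -/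
def coneD : Set Mat4 :=
  { x | ∃ (n : ℕ) (ξ ζ : Fin n → Vec4),
      (∀ k, FutureCausal (ξ k)) ∧ (∀ k, FutureCausal (ζ k)) ∧
      x = ∑ k, (1/2 : ℝ) • (vecMulVec (ξ k) (ζ k) + vecMulVec (ζ k) (ξ k)) }

/-- A symmetric matrix is generic if it lies in the interior of D, taken within
the space of symmetric matrices. -/
def Generic (x : Mat4) : Prop :=
  ∃ h : xᵀ = x, (⟨x, h⟩ : { A : Mat4 // Aᵀ = A }) ∈
    interior { A : { A : Mat4 // Aᵀ = A } | A.val ∈ coneD }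

/-- Partial derivative in the a-th coordinate direction. -/
def pd (a : Fin 4) (f : Vec4 → ℝ) (p : Vec4) : ℝ := fderiv ℝ f p (Pi.single a 1)

def SmoothMatField (T : Vec4 → Mat4) : Prop := ∀ a b, ContDiff ℝ (⊤ : ℕ∞) fun p => T p a b
def SymValued (T : Vec4 → Mat4) : Prop := ∀ p, (T p)ᵀ = T p
def DivFree (T : Vec4 → Mat4) : Prop := ∀ p b, ∑ a, pd a (fun q => T q a b) p = 0

/-- A collection of fields tracks a curve. -/
def Tracks (C : Set (Vec4 → Mat4)) (γ : ℝ → Vec4) : Prop :=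
  ∀ x : Vec4 → Mat4, SmoothMatField x → HasCompactSupport x → SymValued x →
    (∃ O : Set Vec4, IsOpen O ∧ Set.range γ ⊆ O ∧ ∀ p ∈ O, x p ∈ coneD) →
    (∃ t₀ : ℝ, Generic (x (γ t₀))) →
    ∃ T ∈ C, 0 < ∫ p, minner (T p) (x p)

/-- Maxwell stress-energy tensor of a field strength matrix. -/
def maxwellT (F : Mat4) : Mat4 :=
  F * E * F - ((1/4 : ℝ) * (E * F * E * F).trace) • E

/-- Source-free Maxwell equations. -/
def SolvesMaxwell (F : Vec4 → Mat4) : Prop :=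
  (∀ p b, ∑ a, E a a * pd a (fun q => F q a b) p = 0) ∧
  (∀ p a b c, pd a (fun q => F q b c) p + pd b (fun q => F q c a) p
      + pd c (fun q => F q a b) p = 0)

/-- Klein–Gordon stress-energy tensor. -/
def kgT (φ : Vec4 → ℝ) (m : ℝ) (p : Vec4) : Mat4 :=
  Matrix.of fun a b =>
    pd a φ p * pd b φ p
      - (1/2 : ℝ) * E a b * ((∑ c, E c c * (pd c φ p)^2) - m^2 * (φ p)^2)

/-- Mass-m Klein–Gordon equation. -/
def SolvesKG (φ : Vec4 → ℝ) (m : ℝ) : Prop :=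
  ∀ p, pd 0 (pd 0 φ) p - pd 1 (pd 1 φ) p - pd 2 (pd 2 φ) p - pd 3 (pd 3 φ) p
    + m^2 * φ p = 0

lemma futureCausal_smul {c : ℝ} (hc : 0 ≤ c) {ξ : Vec4} (h : FutureCausal ξ) :
    FutureCausal (c • ξ) := by
  obtain ⟨h1, h2⟩ := h
  refine ⟨?_, ?_⟩
  · have : mink (c • ξ) (c • ξ) = c ^ 2 * mink ξ ξ := by
      simp only [mink, Pi.smul_apply, smul_eq_mul]; ring
    rw [this]; positivity
  · simpa using mul_nonneg hc h2

lemma futureCausal_single_add (b : Fin 4) {r : ℝ} (hr : |r| ≤ 1) :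
    FutureCausal (Pi.single 0 1 + r • Pi.single b 1) := by
  obtain ⟨h1, h2⟩ := abs_le.1 hr
  fin_cases b <;> simp [FutureCausal, mink] <;> first | nlinarith | (constructor <;> nlinarith)

lemma coneD_zero : (0 : Mat4) ∈ coneD :=
  ⟨0, Fin.elim0, Fin.elim0, fun k => k.elim0, fun k => k.elim0, by simp⟩

lemma coneD_add {x y : Mat4} (hx : x ∈ coneD) (hy : y ∈ coneD) : x + y ∈ coneD := by
  obtain ⟨n, ξ, ζ, h1, h2, rfl⟩ := hx
  obtain ⟨m, ξ', ζ', h1', h2', rfl⟩ := hy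
  refine ⟨n + m, Fin.append ξ ξ', Fin.append ζ ζ', ?_, ?_, ?_⟩
  · intro k
    refine Fin.addCases (fun i => ?_) (fun i => ?_) k
    · simpa using h1 i
    · simpa using h1' i
  · intro k
    refine Fin.addCases (fun i => ?_) (fun i => ?_) k
    · simpa using h2 i
    · simpa using h2' i
  · rw [Fin.sum_univ_add]
    simp

lemma coneD_smul {c : ℝ} (hc : 0 ≤ c) {x : Mat4} (hx : x ∈ coneD) : c • x ∈ coneD := by
  obtain ⟨n, ξ, ζ, h1, h2, rfl⟩ := hx
  refine ⟨n, fun k => c • ξ k, ζ, fun k => futureCausal_smul hc (h1 k), h2, ?_⟩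
  rw [Finset.smul_sum]
  refine Finset.sum_congr rfl fun k _ => ?_
  rw [smul_vecMulVec, vecMulVec_smul, ← smul_add, smul_comm]

lemma coneD_sum {ι : Type*} (s : Finset ι) (f : ι → Mat4) (h : ∀ i ∈ s, f i ∈ coneD) :
    ∑ i ∈ s, f i ∈ coneD := by
  classical
  induction s using Finset.induction_on with
  | empty => simpa using coneD_zero
  | insert i s his ih =>
    rw [Finset.sum_insert his]
    exact coneD_add (h _ (Finset.mem_insert_self _ _))
      (ih fun j hj => h j (Finset.mem_insert_of_mem hj))

lemma coneD_sym {ξ ζ : Vec4} (hξ : FutureCausal ξ) (hζ : FutureCausal ζ) :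
    (1/2 : ℝ) • (vecMulVec ξ ζ + vecMulVec ζ ξ) ∈ coneD :=
  ⟨1, fun _ => ξ, fun _ => ζ, fun _ => hξ, fun _ => hζ, by simp⟩

/-- The matrix `e₀ e₀ᵀ`. -/
def timeMat : Mat4 := Matrix.single 0 0 1

/-- The symmetrized product of two coordinate vectors. -/
def symBasis (a b : Fin 4) : Mat4 :=
  (1/2 : ℝ) • (Matrix.single a b 1 + Matrix.single b a 1)

lemma vecMulVec_single_single (a b : Fin 4) :
    vecMulVec (Pi.single a (1 : ℝ)) (Pi.single b 1) = Matrix.single a b (1 : ℝ) := by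
  ext i j
  simp only [vecMulVec_apply, Pi.single_apply, Matrix.single_apply, eq_comm (a := a) (b := i),
    eq_comm (a := b) (b := j)]
  by_cases h1 : i = a <;> by_cases h2 : j = b <;> simp [h1, h2]

lemma timeMat_add_symBasis_mem_coneD (a b : Fin 4) {r : ℝ} (hr : |r| ≤ 1) :
    timeMat + r • symBasis a b ∈ coneD := by
  have h1 := futureCausal_single_add a (r := 1) (by simp)
  have h2 := futureCausal_single_add b hr
  have h3 := futureCausal_single_add a (r := -1) (by simp)
  have h4 := futureCausal_single_add b (r := -r) (by simpa using hr)
  have := coneD_smul (c := 1/2) (by norm_num) (coneD_add (coneD_sym h1 h2) (coneD_sym h3 h4))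
  convert this using 1
  simp only [vecMulVec_add, add_vecMulVec, smul_vecMulVec, vecMulVec_smul,
    vecMulVec_single_single, timeMat, symBasis]
  module

lemma timeMat_mem_coneD : timeMat ∈ coneD := by
  simpa using timeMat_add_symBasis_mem_coneD 0 0 (r := 0) (by simp)

lemma timeMat_transpose : timeMatᵀ = timeMat := by simp [timeMat]

lemma eq_sum_symBasis {A : Mat4} (hA : Aᵀ = A) : A = ∑ a, ∑ b, A a b • symBasis a b := by
  have h : ∀ i j, A j i = A i j := fun i j => by conv_lhs => rw [← hA, transpose_apply]
  ext i j
  fin_cases i <;> fin_cases j <;>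
    simp [Fin.sum_univ_four, symBasis] <;>
    ring_nf <;> simp only [h 0 1, h 0 2, h 0 3, h 1 2, h 1 3, h 2 3] <;> ring

lemma generic_smul_timeMat {c : ℝ} (hc : 0 < c) : Generic (c • timeMat) := by
  have hs : (c • timeMat)ᵀ = c • timeMat := by rw [transpose_smul, timeMat_transpose]
  refine ⟨hs, ?_⟩
  rw [mem_interior_iff_mem_nhds]
  have hev : ∀ a b : Fin 4, ∀ᶠ A : { A : Mat4 // Aᵀ = A } in 𝓝 ⟨c • timeMat, hs⟩,
      |A.val a b - (c • timeMat) a b| < c / 16 := by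
    intro a b
    have hcont : Continuous fun A : { A : Mat4 // Aᵀ = A } =>
        |A.val a b - (c • timeMat) a b| :=
      ((continuous_subtype_val.matrix_elem a b).sub continuous_const).abs
    refine hcont.continuousAt.eventually_lt continuousAt_const ?_
    simp only [sub_self, abs_zero]
    positivity
  have hev' := eventually_all.2 fun a => eventually_all.2 fun b => hev a b
  filter_upwards [hev'] with A hA
  have hδ : (A.val - c • timeMat)ᵀ = A.val - c • timeMat := by
    rw [transpose_sub, hs, A.2]
  have hsum : A.val = ∑ a : Fin 4, ∑ b : Fin 4, (c / 16) •
      (timeMat + ((A.val - c • timeMat) a b / (c / 16)) • symBasis a b) := by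
    have : ∀ a b : Fin 4, (c / 16) •
      (timeMat + ((A.val - c • timeMat) a b / (c / 16)) • symBasis a b)
        = (c / 16) • timeMat + (A.val - c • timeMat) a b • symBasis a b := by
      intro a b
      rw [smul_add, smul_smul, mul_div_cancel₀ _ (by positivity)]
    simp only [this, Finset.sum_add_distrib, ← eq_sum_symBasis hδ]
    simp only [Finset.sum_const, Finset.card_univ, Fintype.card_fin]
    module
  change A.val ∈ coneD
  rw [hsum]
  refine coneD_sum _ _ fun a _ => coneD_sum _ _ fun b _ => coneD_smul (by positivity)
    (timeMat_add_symBasis_mem_coneD a b ?_)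
  rw [abs_div, abs_of_pos (by positivity : 0 < c / 16), div_le_one (by positivity)]
  exact (hA a b).le

lemma minner_smul_timeMat (T : Mat4) (c : ℝ) : minner T (c • timeMat) = T 0 0 * c := by
  simp [minner, Fin.sum_univ_four, timeMat, Matrix.single_apply]

lemma DEC.nonneg_entry {T : Mat4} (hT : DEC T) (a b : Fin 4) {s r : ℝ} (hs : |s| ≤ 1)
    (hr : |r| ≤ 1) : 0 ≤ T 0 0 + r * T 0 b + s * T a 0 + s * r * T a b := by
  have h := hT _ _ (futureCausal_single_add a hs) (futureCausal_single_add b hr)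
  have e : ∑ i, ∑ j, (Pi.single 0 1 + s • Pi.single a 1 : Vec4) i * T i j *
      (Pi.single 0 1 + r • Pi.single b 1 : Vec4) j
      = T 0 0 + r * T 0 b + s * T a 0 + s * r * T a b := by
    have h1 : ∀ i j, (Pi.single 0 1 + s • Pi.single a 1 : Vec4) i * T i j *
      (Pi.single 0 1 + r • Pi.single b 1 : Vec4) j =
       (Pi.single 0 1 : Vec4) i * (T i j * (Pi.single 0 1 : Vec4) j)
       + (Pi.single 0 1 : Vec4) i * (T i j * (Pi.single b 1 : Vec4) j) * r
       + s * ((Pi.single a 1 : Vec4) i * (T i j * (Pi.single 0 1 : Vec4) j))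
       + s * ((Pi.single a 1 : Vec4) i * (T i j * (Pi.single b 1 : Vec4) j)) * r := by
      intro i j
      simp only [Pi.add_apply, Pi.smul_apply, smul_eq_mul]; ring
    simp only [h1, Finset.sum_add_distrib, ← Finset.mul_sum, ← Finset.sum_mul]
    simp [Pi.single_apply]
    ring
  rwa [e] at h

lemma DEC.abs_le {T : Mat4} (hT : DEC T) (a b : Fin 4) : |T a b| ≤ T 0 0 := by
  have h1 := hT.nonneg_entry a b (s := 1) (r := 1) (by simp) (by simp)
  have h2 := hT.nonneg_entry a b (s := -1) (r := -1) (by simp) (by simp)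
  have h3 := hT.nonneg_entry a b (s := 1) (r := -1) (by simp) (by simp)
  have h4 := hT.nonneg_entry a b (s := -1) (r := 1) (by simp) (by simp)
  rw [_root_.abs_le]
  constructor <;> linarith

lemma DEC.nonneg {T : Mat4} (hT : DEC T) : 0 ≤ T 0 0 := (abs_nonneg _).trans (hT.abs_le 0 0)

lemma unitTimelike_single : UnitTimelike (Pi.single 0 1) := by
  simp [UnitTimelike, FutureTimelike, mink]

lemma unitTimelike_boost {a : Fin 4} (ha : a ≠ 0) :
    UnitTimelike ((5/4 : ℝ) • Pi.single 0 1 + (3/4 : ℝ) • Pi.single a 1) := by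
  fin_cases a
  · exact absurd rfl ha
  all_goals
    simp [UnitTimelike, FutureTimelike, mink]
    norm_num

lemma abs_current_le {T : Mat4} (hT : DEC T) {κ : ℝ} (hκ : 0 ≤ κ) {j : Vec4}
    (hj : ∀ t : Vec4, UnitTimelike t → |∑ a, j a * t a| ≤ κ * ∑ a, ∑ b, T a b * t a * t b)
    (a : Fin 4) : |j a| ≤ 7 * κ * T 0 0 := by
  have h0 := hj _ unitTimelike_single
  have hT0 := hT.nonneg
  have hκT : 0 ≤ κ * T 0 0 := mul_nonneg hκ hT0
  have e0 : |j 0| ≤ κ * T 0 0 := by simpa [Pi.single_apply] using h0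
  by_cases ha : a = 0
  · subst ha; linarith
  have h1 := hj _ (unitTimelike_boost ha)
  have e1 : ∑ i, j i * ((5/4 : ℝ) • Pi.single 0 1 + (3/4 : ℝ) • Pi.single a 1 : Vec4) i
      = 5/4 * j 0 + 3/4 * j a := by
    simp only [Pi.add_apply, Pi.smul_apply, smul_eq_mul, mul_add, Finset.sum_add_distrib,
      Pi.single_apply]
    simp
    ring
  have e2 : ∑ i, ∑ k, T i k * ((5/4 : ℝ) • Pi.single 0 1 + (3/4 : ℝ) • Pi.single a 1 : Vec4) i
      * ((5/4 : ℝ) • Pi.single 0 1 + (3/4 : ℝ) • Pi.single a 1 : Vec4) k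
      = 25/16 * T 0 0 + 15/16 * T 0 a + 15/16 * T a 0 + 9/16 * T a a := by
    simp only [Pi.add_apply, Pi.smul_apply, smul_eq_mul, mul_add, add_mul, Finset.sum_add_distrib,
      Pi.single_apply]
    simp
    ring
  rw [e1, e2] at h1
  have b1 := le_abs_self (T 0 a) |>.trans (hT.abs_le 0 a)
  have b2 := le_abs_self (T a 0) |>.trans (hT.abs_le a 0)
  have b3 := le_abs_self (T a a) |>.trans (hT.abs_le a a)
  have h2 : κ * (25/16 * T 0 0 + 15/16 * T 0 a + 15/16 * T a 0 + 9/16 * T a a)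
      ≤ κ * (4 * T 0 0) := mul_le_mul_of_nonneg_left (by linarith) hκ
  rw [_root_.abs_le] at h1 e0 ⊢
  constructor <;> linarith [h1.1, h1.2, e0.1, e0.2]

lemma exists_primitive {f : ℝ → ℝ} (hf : ContDiff ℝ (⊤ : ℕ∞) f) {R : ℝ}
    (hsupp : ∀ r, R ≤ |r| → f r = 0) (hint : ∫ x in (-R)..R, f x = 0) :
    ∃ Φ : ℝ → ℝ, ContDiff ℝ (⊤ : ℕ∞) Φ ∧ (∀ r, R ≤ |r| → Φ r = 0) ∧ (∀ r, deriv Φ r = f r) ∧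
      ∀ r, Φ r = ∫ x in (-R)..r, f x := by
  have hd : ∀ r, HasDerivAt (fun r => ∫ x in (-R)..r, f x) (f r) r := fun r =>
    intervalIntegral.integral_hasDerivAt_right (hf.continuous.intervalIntegrable _ _)
      hf.continuous.aestronglyMeasurable.stronglyMeasurableAtFilter hf.continuous.continuousAt
  refine ⟨fun r => ∫ x in (-R)..r, f x, ?_, ?_, fun r => (hd r).deriv, fun r => rfl⟩
  · refine contDiff_infty_iff_deriv.2 ⟨fun r => (hd r).differentiableAt, ?_⟩
    rwa [show deriv (fun r => ∫ x in (-R)..r, f x) = f from funext fun r => (hd r).deriv]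
  · intro r hr
    rcases le_abs'.1 hr with h | h
    · change ∫ x in (-R)..r, f x = 0
      rw [intervalIntegral.integral_symm, intervalIntegral.integral_congr (g := fun _ => 0)]
      · simp
      · intro x hx
        rw [Set.uIcc_of_le h] at hx
        exact hsupp x (le_abs'.2 (Or.inl hx.2))
    · change ∫ x in (-R)..r, f x = 0
      rw [← intervalIntegral.integral_add_adjacent_intervals (b := R)
        (hf.continuous.intervalIntegrable _ _) (hf.continuous.intervalIntegrable _ _), hint,
        intervalIntegral.integral_congr (a := R) (g := fun _ => 0)]
      · simp
      · intro x hx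
        rw [Set.uIcc_of_le h] at hx
        exact hsupp x (le_abs'.2 (Or.inr hx.1))

lemma exists_transport_of_pos {C t₁ : ℝ} (ht : 0 < t₁) :
    ∃ k₁ k₀ h : ℝ → ℝ, ContDiff ℝ (⊤ : ℕ∞) h ∧ Continuous k₁ ∧ Continuous k₀ ∧
      (∀ r, 0 ≤ k₁ r) ∧ 0 < k₁ t₁ ∧ (∀ r, 0 ≤ k₀ r) ∧ (∀ r, 1 ≤ |r| → k₀ r = 0) ∧
      (∀ r, 2 * |t₁| + 1 ≤ |r| → h r = 0) ∧ (∀ r, 2 * |t₁| + 1 ≤ |r| → k₁ r = 0) ∧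
      ∀ r, k₁ r - k₀ r = -deriv h r - C * |h r| := by
  let b₁ : ContDiffBump t₁ := ⟨t₁ / 4, t₁ / 2, by positivity, by linarith⟩
  let b₀ : ContDiffBump (-1/2 : ℝ) := ⟨1 / 4, 1 / 2, by positivity, by norm_num⟩
  set R := 2 * |t₁| + 1 with hR
  rw [abs_of_pos ht] at hR
  have hRpos : 0 < R := by positivity
  have hb₁ : ∀ r, r ∉ Set.Ioo (t₁/2) (3 * t₁/2) → b₁ r = 0 := by
    intro r hr
    refine b₁.zero_of_le_dist ?_
    change t₁ / 2 ≤ dist r t₁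
    by_contra! hlt
    rw [Real.dist_eq, abs_lt] at hlt
    exact hr ⟨by linarith [hlt.1], by linarith [hlt.2]⟩
  have hb₀ : ∀ r, r ∉ Set.Ioo (-1 : ℝ) 0 → b₀ r = 0 := by
    intro r hr
    refine b₀.zero_of_le_dist ?_
    change 1 / 2 ≤ dist r (-1/2)
    by_contra! hlt
    rw [Real.dist_eq, abs_lt] at hlt
    exact hr ⟨by linarith [hlt.1], by linarith [hlt.2]⟩
  have hb₁s : ContDiff ℝ (⊤ : ℕ∞) b₁ := b₁.contDiff
  have hb₀s : ContDiff ℝ (⊤ : ℕ∞) b₀ := b₀.contDiff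
  have hes : ContDiff ℝ (⊤ : ℕ∞) fun r : ℝ => Real.exp (C * r) := by fun_prop
  set I₁ := ∫ x in (-R)..R, Real.exp (C * x) * b₁ x with hI₁
  set I₀ := ∫ x in (-R)..R, Real.exp (C * x) * b₀ x with hI₀
  have hc₀ : Continuous fun x => Real.exp (C * x) * b₀ x := (hes.mul hb₀s).continuous
  have hc₁ : Continuous fun x => Real.exp (C * x) * b₁ x := (hes.mul hb₁s).continuous
  have hI₁nn : 0 ≤ I₁ := intervalIntegral.integral_nonneg (by linarith) fun x _ =>
    mul_nonneg (Real.exp_pos _).le b₁.nonneg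
  have hI₀pos : 0 < I₀ := by
    refine intervalIntegral.integral_pos (by linarith) hc₀.continuousOn
      (fun x _ => mul_nonneg (Real.exp_pos _).le b₀.nonneg) ⟨-1/2, ⟨by linarith, by linarith⟩, ?_⟩
    refine mul_pos (Real.exp_pos _) (b₀.pos_of_mem_ball ?_)
    simpa using b₀.rOut_pos
  set c := I₁ / I₀ with hc
  have hcnn : 0 ≤ c := by positivity
  set f : ℝ → ℝ := fun r => Real.exp (C * r) * b₁ r - c * (Real.exp (C * r) * b₀ r) with hf
  have hfs : ContDiff ℝ (⊤ : ℕ∞) f := (hes.mul hb₁s).sub (contDiff_const.mul (hes.mul hb₀s))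
  have hb₁R : ∀ r, R ≤ |r| → b₁ r = 0 := by
    intro r hr
    refine hb₁ r fun h => ?_
    rcases le_abs'.1 hr with h' | h' <;> linarith [h.1, h.2]
  have hb₀R : ∀ r, 1 ≤ |r| → b₀ r = 0 := by
    intro r hr
    refine hb₀ r fun h => ?_
    rcases le_abs'.1 hr with h' | h' <;> linarith [h.1, h.2]
  have hfsupp : ∀ r, R ≤ |r| → f r = 0 := by
    intro r hr
    simp [hf, hb₁R r hr, hb₀R r (by linarith)]
  have hfint : ∫ x in (-R)..R, f x = 0 := by
    have hc₀' : Continuous fun x => c * (Real.exp (C * x) * b₀ x) := continuous_const.mul hc₀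
    simp only [hf]
    rw [intervalIntegral.integral_sub (hc₁.intervalIntegrable _ _)
      (hc₀'.intervalIntegrable _ _), intervalIntegral.integral_const_mul,
      ← hI₁, ← hI₀, hc, div_mul_cancel₀ _ hI₀pos.ne', sub_self]
  obtain ⟨Φ, hΦs, hΦR, hΦd, hΦ⟩ := exists_primitive hfs hfsupp hfint
  have hΦnp : ∀ r, Φ r ≤ 0 := by
    intro r
    by_cases hr : R ≤ |r|
    · exact (hΦR r hr).le
    rw [not_le, abs_lt] at hr
    rcases le_total r 0 with h | h
    · rw [hΦ, ← neg_nonneg, ← intervalIntegral.integral_neg]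
      refine intervalIntegral.integral_nonneg hr.1.le fun x hx => ?_
      have h0 : b₁ x = 0 := hb₁ x fun h' => by linarith [h'.1, hx.2]
      have := mul_nonneg hcnn (mul_nonneg (Real.exp_pos (C * x)).le (b₀.nonneg (x := x)))
      simp only [hf, h0]
      linarith
    · have e := intervalIntegral.integral_add_adjacent_intervals (a := -R) (b := r) (c := R)
        (hfs.continuous.intervalIntegrable (μ := volume) _ _)
        (hfs.continuous.intervalIntegrable (μ := volume) _ _)
      rw [hfint] at e
      have : 0 ≤ ∫ x in r..R, f x := by
        refine intervalIntegral.integral_nonneg hr.2.le fun x hx => ?_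
        have h0 : b₀ x = 0 := hb₀ x fun h' => by linarith [h'.2, hx.1]
        have := mul_nonneg (Real.exp_pos (C * x)).le (b₁.nonneg (x := x))
        simp only [hf, h0]
        linarith
      rw [hΦ]
      linarith
  refine ⟨b₁, fun r => c * b₀ r, fun r => -(Real.exp (-C * r) * Φ r), ?_, hb₁s.continuous,
    continuous_const.mul hb₀s.continuous, fun r => b₁.nonneg, ?_,
    fun r => mul_nonneg hcnn b₀.nonneg, ?_, ?_, hb₁R, ?_⟩
  · have : ContDiff ℝ (⊤ : ℕ∞) fun r : ℝ => Real.exp (-C * r) := by fun_prop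
    exact (this.mul hΦs).neg
  · refine b₁.pos_of_mem_ball ?_
    simpa using b₁.rOut_pos
  · intro r hr
    simp [hb₀R r hr]
  · intro r hr
    simp [hΦR r hr]
  · intro r
    have hd : HasDerivAt (fun r => -(Real.exp (-C * r) * Φ r))
        (-(Real.exp (-C * r) * (-C) * Φ r + Real.exp (-C * r) * f r)) r := by
      have h1 : HasDerivAt (fun r : ℝ => Real.exp (-C * r)) (Real.exp (-C * r) * (-C)) r := by
        simpa using ((hasDerivAt_id r).const_mul (-C)).exp
      have h2 : HasDerivAt Φ (f r) r := by
        rw [← hΦd r]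
        exact ((hΦs.differentiable (by simp)) r).hasDerivAt
      exact (h1.mul h2).neg
    have habs : |-(Real.exp (-C * r) * Φ r)| = -(Real.exp (-C * r) * Φ r) :=
      abs_of_nonneg (neg_nonneg.2 (mul_nonpos_of_nonneg_of_nonpos (Real.exp_pos _).le (hΦnp r)))
    have hE : Real.exp (-C * r) * Real.exp (C * r) = 1 := by
      rw [← Real.exp_add]; simp
    rw [hd.deriv, habs, hf]
    linear_combination (-(b₁ r) + c * b₀ r) * hE

/-- A nonnegative source `k₁` near `t₁` can be compared with a source `k₀` near the origin by
transport with rate `C`. -/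
lemma exists_transport (C : ℝ) {t₁ : ℝ} (ht : t₁ ≠ 0) :
    ∃ k₁ k₀ h : ℝ → ℝ, ContDiff ℝ (⊤ : ℕ∞) h ∧ Continuous k₁ ∧ Continuous k₀ ∧
      (∀ r, 0 ≤ k₁ r) ∧ 0 < k₁ t₁ ∧ (∀ r, 0 ≤ k₀ r) ∧ (∀ r, 1 ≤ |r| → k₀ r = 0) ∧
      (∀ r, 2 * |t₁| + 1 ≤ |r| → h r = 0) ∧ (∀ r, 2 * |t₁| + 1 ≤ |r| → k₁ r = 0) ∧
      ∀ r, k₁ r - k₀ r = -deriv h r - C * |h r| := by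
  rcases ht.lt_or_gt with ht | ht
  · obtain ⟨k₁, k₀, h, h1, h2, h3, h4, h5, h6, h7, h8, h9, h10⟩ :=
      exists_transport_of_pos (C := C) (t₁ := -t₁) (by linarith)
    rw [abs_neg] at h8 h9
    refine ⟨fun r => k₁ (-r), fun r => k₀ (-r), fun r => -h (-r), ?_, by fun_prop, by fun_prop,
      fun r => h4 _, h5, fun r => h6 _, fun r hr => h7 _ (by simpa using hr),
      fun r hr => by simp [h8 (-r) (by simpa using hr)], fun r hr => h9 _ (by simpa using hr), ?_⟩
    · exact (h1.comp contDiff_neg).neg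
    · intro r
      have hd : deriv (fun r => -h (-r)) r = deriv h (-r) := by
        rw [deriv.fun_neg, deriv_comp_neg]; simp
      rw [hd, h10, abs_neg]
  · exact exists_transport_of_pos ht

/-- Smooth compactly supported functions of one real variable. -/
def IsTest (φ : ℝ → ℝ) : Prop := ContDiff ℝ (⊤ : ℕ∞) φ ∧ HasCompactSupport φ

lemma contDiff_deriv_of_contDiff_top {φ : ℝ → ℝ} (h : ContDiff ℝ (⊤ : ℕ∞) φ) :
    ContDiff ℝ (⊤ : ℕ∞) (deriv φ) := (contDiff_infty_iff_deriv.1 h).2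

lemma IsTest.mul_left {φ g : ℝ → ℝ} (h : IsTest φ) (hg : ContDiff ℝ (⊤ : ℕ∞) g) :
    IsTest fun t => g t * φ t := ⟨hg.mul h.1, h.2.mul_left⟩

lemma IsTest.deriv {φ : ℝ → ℝ} (h : IsTest φ) : IsTest (deriv φ) :=
  ⟨contDiff_deriv_of_contDiff_top h.1, h.2.deriv⟩

lemma IsTest.add {φ ψ : ℝ → ℝ} (h : IsTest φ) (h' : IsTest ψ) : IsTest fun t => φ t + ψ t :=
  ⟨h.1.add h'.1, h.2.add h'.2⟩

lemma IsTest.integrable {φ : ℝ → ℝ} (h : IsTest φ) : Integrable φ :=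
  h.1.continuous.integrable_of_hasCompactSupport h.2

lemma IsTest.exists_bound {φ : ℝ → ℝ} (h : IsTest φ) : ∃ R : ℝ, ∀ r, R ≤ |r| → φ r = 0 := by
  obtain ⟨R, hR⟩ := h.2.isCompact.isBounded.subset_ball (0 : ℝ)
  refine ⟨R, fun r hr => ?_⟩
  by_contra hne
  have := hR (subset_tsupport _ hne)
  rw [mem_ball_zero_iff, Real.norm_eq_abs] at this
  linarith

lemma IsTest.exists_primitive {φ : ℝ → ℝ} (h : IsTest φ) (h0 : ∫ t, φ t = 0) :
    ∃ Φ, IsTest Φ ∧ _root_.deriv Φ = φ := by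
  obtain ⟨R, hR⟩ := h.exists_bound
  have hR' : ∀ r, max R 0 + 1 ≤ |r| → φ r = 0 := fun r hr =>
    hR r (by linarith [le_max_left R 0])
  have hpos : 0 < max R 0 + 1 := by positivity
  have hint : ∫ x in (-(max R 0 + 1))..(max R 0 + 1), φ x = 0 := by
    rw [intervalIntegral.integral_eq_integral_of_support_subset, h0]
    intro x hx
    have : |x| < max R 0 + 1 := by
      by_contra! hle
      exact hx (hR' x hle)
    rw [abs_lt] at this
    exact ⟨this.1, this.2.le⟩
  obtain ⟨Φ, h1, h2, h3, -⟩ := _root_.exists_primitive h.1 hR' hint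
  refine ⟨Φ, ⟨h1, HasCompactSupport.intro (isCompact_Icc (a := -(max R 0 + 1))
    (b := max R 0 + 1)) fun x hx => h2 x ?_⟩, funext h3⟩
  by_contra! hlt
  rw [abs_lt] at hlt
  exact hx ⟨hlt.1.le, hlt.2.le⟩

lemma exists_charge_of_limit_relations {u f : Fin 4 → ℝ → ℝ}
    (hu : ∀ a, ContDiff ℝ (⊤ : ℕ∞) (u a)) (hf : ∀ a, ContDiff ℝ (⊤ : ℕ∞) (f a))
    {m q : ℕ → (ℝ → ℝ) → ℝ} {κ : ℝ} {b : ℝ → ℝ} (hb : IsTest b) (hbint : ∫ t, b t ≠ 0)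
    (madd : ∀ n φ ψ, IsTest φ → IsTest ψ → m n (fun t => φ t + ψ t) = m n φ + m n ψ)
    (msmul : ∀ n (c : ℝ) φ, m n (fun t => c * φ t) = c * m n φ)
    (qadd : ∀ n φ ψ, IsTest φ → IsTest ψ → q n (fun t => φ t + ψ t) = q n φ + q n ψ)
    (qsmul : ∀ n (c : ℝ) φ, q n (fun t => c * φ t) = c * q n φ)
    (mderiv : ∀ φ, IsTest φ → Tendsto (fun n => m n (deriv φ)) atTop (𝓝 0))
    (qderiv : ∀ φ, IsTest φ → Tendsto (fun n => q n (deriv φ)) atTop (𝓝 0))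
    (force : ∀ a φ, IsTest φ → Tendsto (fun n => m n (fun t => u a t * deriv φ t)
      + q n (fun t => f a t * φ t)) atTop (𝓝 0))
    (hmb : ∀ n, m n b = 1) (hqb : ∀ ε > 0, ∀ᶠ n in atTop, |q n b| ≤ κ + ε) :
    ∃ κ' : ℝ, |κ'| ≤ κ ∧ ∀ t a, deriv (u a) t = κ' * f a t := by
  set I := ∫ t, b t with hI
  have decomp : ∀ φ, IsTest φ → ∃ Φ, IsTest Φ ∧
      φ = fun t => deriv Φ t + ((∫ t, φ t) / I) * b t := by
    intro φ hφ
    have h1 : IsTest fun t => φ t + (-((∫ t, φ t) / I)) * b t :=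
      hφ.add (hb.mul_left contDiff_const)
    obtain ⟨Φ, hΦ, hd⟩ := h1.exists_primitive (by
      rw [integral_add hφ.integrable (hb.mul_left contDiff_const).integrable,
        integral_const_mul, ← hI]
      field_simp
      ring)
    exact ⟨Φ, hΦ, by rw [hd]; funext t; ring⟩
  have mlim : ∀ φ, IsTest φ → Tendsto (fun n => m n φ) atTop (𝓝 ((∫ t, φ t) / I)) := by
    intro φ hφ
    obtain ⟨Φ, hΦ, e⟩ := decomp φ hφ
    have : ∀ n, m n φ = m n (deriv Φ) + (∫ t, φ t) / I := by
      intro n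
      conv_lhs => rw [e]
      rw [madd n _ _ hΦ.deriv (hb.mul_left contDiff_const), msmul, hmb, mul_one]
    simp only [this]
    simpa using (mderiv Φ hΦ).add_const ((∫ t, φ t) / I)
  obtain ⟨κ', ns, hns, hlim⟩ : ∃ κ' : ℝ, ∃ ns : ℕ → ℕ, StrictMono ns ∧
      Tendsto (fun k => q (ns k) b) atTop (𝓝 κ') := by
    have hfreq : ∃ᶠ n in atTop, q n b ∈ Metric.closedBall (0 : ℝ) (κ + 1) := by
      refine ((hqb 1 one_pos).mono fun n hn => ?_).frequently
      simpa using hn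
    obtain ⟨x, -, ns, h1, h2⟩ := tendsto_subseq_of_frequently_bounded
      Metric.isBounded_closedBall hfreq
    exact ⟨x, ns, h1, h2⟩
  have hκ' : |κ'| ≤ κ := by
    refine le_of_forall_pos_le_add fun ε hε => ?_
    exact le_of_tendsto hlim.abs (hns.tendsto_atTop.eventually (hqb ε hε))
  have qlim : ∀ φ, IsTest φ →
      Tendsto (fun k => q (ns k) φ) atTop (𝓝 ((∫ t, φ t) / I * κ')) := by
    intro φ hφ
    obtain ⟨Φ, hΦ, e⟩ := decomp φ hφ
    have : ∀ n, q n φ = q n (deriv Φ) + (∫ t, φ t) / I * q n b := by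
      intro n
      conv_lhs => rw [e]
      rw [qadd n _ _ hΦ.deriv (hb.mul_left contDiff_const), qsmul]
    simp only [this]
    simpa using ((qderiv Φ hΦ).comp hns.tendsto_atTop).add (hlim.const_mul ((∫ t, φ t) / I))
  refine ⟨κ', hκ', fun t a => ?_⟩
  have hu' := contDiff_deriv_of_contDiff_top (hu a)
  have key : ∀ φ, IsTest φ → ∫ t, φ t • (deriv (u a) t - κ' * f a t) = 0 := by
    intro φ hφ
    have h1 := mderiv _ (hφ.mul_left (hu a))
    have h2 := mlim _ (hφ.mul_left hu')
    have h3 := qlim _ (hφ.mul_left (hf a))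
    have e : ∀ n, m n (deriv fun t => u a t * φ t)
        = m n (fun t => u a t * deriv φ t) + m n (fun t => deriv (u a) t * φ t) := by
      intro n
      rw [← madd n _ _ (hφ.deriv.mul_left (hu a)) (hφ.mul_left hu')]
      congr 1
      funext t
      rw [deriv_fun_mul ((hu a).differentiable (by simp) t) (hφ.1.differentiable (by simp) t)]
      ring
    have h4 := ((force a φ hφ).comp hns.tendsto_atTop).sub (h1.comp hns.tendsto_atTop)
    have h5 := (h4.add (h2.comp hns.tendsto_atTop)).sub h3
    have h6 : (0 : ℝ) - 0 + (∫ t, deriv (u a) t * φ t) / I - (∫ t, f a t * φ t) / I * κ' = 0 := by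
      refine tendsto_nhds_unique h5 (tendsto_const_nhds.congr fun k => ?_)
      simp only [Function.comp_apply, e]
      ring
    have h7 : ∫ t, φ t • (deriv (u a) t - κ' * f a t)
        = (∫ t, deriv (u a) t * φ t) - κ' * ∫ t, f a t * φ t := by
      rw [← integral_const_mul, ← integral_sub (hφ.mul_left hu').integrable
        ((hφ.mul_left (hf a)).integrable.const_mul _)]
      congr 1
      funext t
      simp only [smul_eq_mul]
      ring
    rw [h7]
    field_simp at h6
    linarith
  have hcont : Continuous fun t => deriv (u a) t - κ' * f a t :=
    hu'.continuous.sub (continuous_const.mul (hf a).continuous)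
  have hae := ae_eq_zero_of_integral_contDiff_smul_eq_zero
    (μ := volume) hcont.locallyIntegrable fun g hg hg' => key g ⟨hg, hg'⟩
  have := (Continuous.ae_eq_iff_eq volume hcont continuous_const).1 hae
  exact sub_eq_zero.1 (congrFun this t)

lemma pd_congr {f g : Vec4 → ℝ} {p : Vec4} (h : f =ᶠ[𝓝 p] g) (a : Fin 4) :
    pd a f p = pd a g p := by
  rw [pd, pd, h.fderiv_eq]

lemma pd_mul {f g : Vec4 → ℝ} {p : Vec4} (hf : DifferentiableAt ℝ f p)
    (hg : DifferentiableAt ℝ g p) (a : Fin 4) :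
    pd a (fun q => f q * g q) p = f p * pd a g p + g p * pd a f p := by
  simp [pd, fderiv_fun_mul hf hg]

lemma pd_sub {f g : Vec4 → ℝ} {p : Vec4} (hf : DifferentiableAt ℝ f p)
    (hg : DifferentiableAt ℝ g p) (a : Fin 4) :
    pd a (fun q => f q - g q) p = pd a f p - pd a g p := by
  simp [pd, fderiv_fun_sub hf hg]

lemma pd_coord (a b : Fin 4) (p : Vec4) :
    pd a (fun q => q b) p = if b = a then 1 else 0 := by
  have : HasFDerivAt (fun q : Vec4 => q b) (ContinuousLinearMap.proj (R := ℝ) b) p :=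
    (ContinuousLinearMap.proj (R := ℝ) (φ := fun _ : Fin 4 => ℝ) b).hasFDerivAt
  rw [pd, this.fderiv]
  simp [Pi.single_apply]

lemma pd_comp_time {g : ℝ → ℝ} {p : Vec4} (hg : DifferentiableAt ℝ g (p 0)) (a : Fin 4) :
    pd a (fun q => g (q 0)) p = if a = 0 then deriv g (p 0) else 0 := by
  have h1 : HasFDerivAt (fun q : Vec4 => q 0) (ContinuousLinearMap.proj (R := ℝ) 0) p :=
    (ContinuousLinearMap.proj (R := ℝ) (φ := fun _ : Fin 4 => ℝ) 0).hasFDerivAt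
  have h2 := hg.hasDerivAt.comp_hasFDerivAt p h1
  have h3 : fderiv ℝ (fun q : Vec4 => g (q 0)) p = deriv g (p 0) •
    (ContinuousLinearMap.proj (R := ℝ) (φ := fun _ : Fin 4 => ℝ) 0) := h2.fderiv
  rw [pd, h3]
  simp [Pi.single_apply, eq_comm]

lemma contDiff_pd {f : Vec4 → ℝ} (hf : ContDiff ℝ (⊤ : ℕ∞) f) (a : Fin 4) :
    ContDiff ℝ (⊤ : ℕ∞) (pd a f) :=
  (hf.fderiv_right (m := (⊤ : ℕ∞)) (by simp)).clm_apply contDiff_const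

lemma hasCompactSupport_pd {f : Vec4 → ℝ} (hf : HasCompactSupport f) (a : Fin 4) :
    HasCompactSupport (pd a f) := hf.fderiv_apply (𝕜 := ℝ) (v := Pi.single a 1)

/-- A smooth curve in spacetime together with a smooth function `s` recovering its parameter from
the time coordinate. -/
structure IsWorldline (γ : ℝ → Vec4) (s : ℝ → ℝ) : Prop where
  smooth : ContDiff ℝ (⊤ : ℕ∞) γ
  smooth_time : ContDiff ℝ (⊤ : ℕ∞) s
  time_curve : ∀ t, s (γ t 0) = t
  curve_time : ∀ r, γ (s r) 0 = r

lemma deriv_apply_of_contDiff {γ : ℝ → Vec4} (hγ : ContDiff ℝ (⊤ : ℕ∞) γ) (t : ℝ) (a : Fin 4) :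
    deriv (fun t => γ t a) t = deriv γ t a := by
  rw [deriv_pi fun i => ((contDiff_pi.1 hγ i).differentiable (by simp)) t]

lemma exists_isWorldline {γ : ℝ → Vec4} (hγ : ContDiff ℝ (⊤ : ℕ∞) γ)
    (hunit : ∀ t : ℝ, mink (deriv γ t) (deriv γ t) = 1)
    (htl : ∀ t : ℝ, FutureTimelike (deriv γ t)) : ∃ s, IsWorldline γ s := by
  set f : ℝ → ℝ := fun t => γ t 0 with hf
  have hfs : ContDiff ℝ (⊤ : ℕ∞) f := contDiff_pi.1 hγ 0
  have hfd : ∀ t, HasDerivAt f (deriv γ t 0) t := fun t => by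
    rw [← deriv_apply_of_contDiff hγ]
    exact ((hfs.differentiable (by simp)) t).hasDerivAt
  have hge : ∀ t, 1 ≤ deriv γ t 0 := by
    intro t
    have h1 := hunit t
    have h2 := (htl t).2
    simp only [mink] at h1
    nlinarith [sq_nonneg (deriv γ t 1), sq_nonneg (deriv γ t 2), sq_nonneg (deriv γ t 3)]
  have hmono : StrictMono f := strictMono_of_deriv_pos fun t => by
    rw [(hfd t).deriv]; linarith [hge t]
  have hg : Monotone fun t => f t - t := by
    refine monotone_of_deriv_nonneg (fun t => ((hfd t).sub (hasDerivAt_id t)).differentiableAt)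
      fun t => ?_
    have := ((hfd t).sub (hasDerivAt_id t)).deriv
    change 0 ≤ deriv (f - id) t
    rw [this]
    linarith [hge t]
  have htop : Tendsto f atTop atTop := by
    refine tendsto_atTop_mono' _ ?_ (tendsto_atTop_add_const_left _ (f 0) tendsto_id)
    filter_upwards [eventually_ge_atTop 0] with t ht
    have := hg ht
    simp only [id] at *
    linarith
  have hbot : Tendsto f atBot atBot := by
    refine tendsto_atBot_mono' _ ?_ (tendsto_atBot_add_const_left _ (f 0) tendsto_id)
    filter_upwards [eventually_le_atBot 0] with t ht
    have := hg ht
    simp only [id] at *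
    linarith
  have hsurj : Function.Surjective f := hfs.continuous.surjective htop hbot
  let e : ℝ ≃ₜ ℝ := (hmono.orderIsoOfSurjective f hsurj).toHomeomorph
  refine ⟨e.symm, hγ, e.contDiff_symm_deriv (f' := fun t => deriv γ t 0)
    (fun t => by linarith [hge t]) hfd hfs, fun t => e.symm_apply_apply t,
    fun r => e.apply_symm_apply r⟩

/-- The displacement of an event from the simultaneous event on the curve. -/
def dev (γ : ℝ → Vec4) (s : ℝ → ℝ) (p : Vec4) (a : Fin 4) : ℝ := p a - γ (s (p 0)) a

/-- The squared Euclidean length of the displacement. -/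
def devSq (γ : ℝ → Vec4) (s : ℝ → ℝ) (p : Vec4) : ℝ := ∑ a, dev γ s p a ^ 2

/-- A smooth cutoff to a tube around the curve. -/
def tube (γ : ℝ → Vec4) (s : ℝ → ℝ) (p : Vec4) : ℝ := Real.smoothTransition (2 - devSq γ s p)

/-- Extension of a function of the curve parameter to spacetime, cut off to a tube. -/
def lift (γ : ℝ → Vec4) (s : ℝ → ℝ) (φ : ℝ → ℝ) (p : Vec4) : ℝ := φ (s (p 0)) * tube γ s p

/-- The rate of change of the curve parameter with respect to coordinate time. -/
def rate (γ : ℝ → Vec4) (s : ℝ → ℝ) (t : ℝ) : ℝ := deriv s (γ t 0)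

/-- A cutoff equal to one away from the curve, except near infinity. -/
def shell (γ : ℝ → Vec4) (s : ℝ → ℝ) (n : ℕ) (p : Vec4) : ℝ :=
  Real.smoothTransition (n * devSq γ s p - 1) * Real.smoothTransition (n + 1 - ∑ a, p a ^ 2)

lemma devSq_nonneg (γ : ℝ → Vec4) (s : ℝ → ℝ) (p : Vec4) : 0 ≤ devSq γ s p :=
  Finset.sum_nonneg fun _ _ => sq_nonneg _

lemma tube_nonneg (γ : ℝ → Vec4) (s : ℝ → ℝ) (p : Vec4) : 0 ≤ tube γ s p :=
  Real.smoothTransition.nonneg _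

lemma shell_nonneg (γ : ℝ → Vec4) (s : ℝ → ℝ) (n : ℕ) (p : Vec4) : 0 ≤ shell γ s n p :=
  mul_nonneg (Real.smoothTransition.nonneg _) (Real.smoothTransition.nonneg _)

lemma shell_mono (γ : ℝ → Vec4) (s : ℝ → ℝ) {m n : ℕ} (h : m ≤ n) (p : Vec4) :
    shell γ s m p ≤ shell γ s n p := by
  have h' : (m : ℝ) ≤ n := by exact_mod_cast h
  have := devSq_nonneg γ s p
  exact mul_le_mul (Real.smoothTransition.monotone (by nlinarith))
    (Real.smoothTransition.monotone (by linarith)) (Real.smoothTransition.nonneg _)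
    (Real.smoothTransition.nonneg _)

lemma shell_eq_one {γ : ℝ → Vec4} {s : ℝ → ℝ} {n : ℕ} {p : Vec4} (h : 2 ≤ n * devSq γ s p)
    (h' : ∑ a, p a ^ 2 ≤ n) : shell γ s n p = 1 := by
  rw [shell, Real.smoothTransition.one_of_one_le (by linarith),
    Real.smoothTransition.one_of_one_le (by linarith), one_mul]

lemma shell_eq_zero {γ : ℝ → Vec4} {s : ℝ → ℝ} {n : ℕ} {p : Vec4} (h : n * devSq γ s p < 1) :
    shell γ s n p = 0 := by
  rw [shell, Real.smoothTransition.zero_of_nonpos (by linarith), zero_mul]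

lemma contDiff_smoothTransition : ContDiff ℝ (⊤ : ℕ∞) Real.smoothTransition :=
  Real.smoothTransition.contDiff

lemma hasCompactSupport_of_sum_sq {f : Vec4 → ℝ} {M : ℝ}
    (h : ∀ p, M ≤ ∑ a, p a ^ 2 → f p = 0) : HasCompactSupport f := by
  refine HasCompactSupport.intro (isCompact_closedBall (0 : Vec4) (M + 1)) fun p hp => h p ?_
  by_contra! hlt
  refine hp ?_
  have hM : 0 < M := lt_of_le_of_lt (Finset.sum_nonneg fun _ _ => sq_nonneg _) hlt
  rw [mem_closedBall_zero_iff, pi_norm_le_iff_of_nonneg (by linarith)]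
  intro a
  have := Finset.single_le_sum (f := fun a => p a ^ 2) (fun _ _ => sq_nonneg _)
    (Finset.mem_univ a)
  rw [Real.norm_eq_abs]
  refine abs_le_of_sq_le_sq (by nlinarith) (by linarith)

namespace IsWorldline

variable {γ : ℝ → Vec4} {s : ℝ → ℝ}

lemma smooth_apply (W : IsWorldline γ s) (a : Fin 4) : ContDiff ℝ (⊤ : ℕ∞) fun t => γ t a :=
  contDiff_pi.1 W.smooth a

lemma smooth_velocity (W : IsWorldline γ s) (a : Fin 4) :
    ContDiff ℝ (⊤ : ℕ∞) fun t => deriv γ t a := by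
  have := contDiff_deriv_of_contDiff_top (W.smooth_apply a)
  rwa [funext fun t => deriv_apply_of_contDiff W.smooth t a] at this

lemma smooth_rate (W : IsWorldline γ s) : ContDiff ℝ (⊤ : ℕ∞) (rate γ s) :=
  (contDiff_deriv_of_contDiff_top W.smooth_time).comp (W.smooth_apply 0)

lemma rate_mul_velocity (W : IsWorldline γ s) (t : ℝ) : rate γ s t * deriv γ t 0 = 1 := by
  have h1 := ((W.smooth_time.differentiable (by simp)) (γ t 0)).hasDerivAt
  have h2 := ((W.smooth_apply 0).differentiable (by simp) t).hasDerivAt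
  rw [deriv_apply_of_contDiff W.smooth] at h2
  have h3 : HasDerivAt (fun t => s (γ t 0)) (deriv s (γ t 0) * deriv γ t 0) t := h1.comp t h2
  simp only [W.time_curve] at h3
  exact h3.unique (hasDerivAt_id' t)

lemma deriv_time (W : IsWorldline γ s) (r : ℝ) : deriv s r = rate γ s (s r) := by
  rw [rate, W.curve_time]

lemma contDiff_comp_time (W : IsWorldline γ s) {φ : ℝ → ℝ} (hφ : ContDiff ℝ (⊤ : ℕ∞) φ) :
    ContDiff ℝ (⊤ : ℕ∞) fun p : Vec4 => φ (s (p 0)) :=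
  hφ.comp (W.smooth_time.comp (contDiff_apply ℝ ℝ (0 : Fin 4)))

lemma contDiff_dev (W : IsWorldline γ s) (a : Fin 4) :
    ContDiff ℝ (⊤ : ℕ∞) fun p => dev γ s p a :=
  (contDiff_apply ℝ ℝ a).sub (W.contDiff_comp_time (W.smooth_apply a))

lemma contDiff_devSq (W : IsWorldline γ s) : ContDiff ℝ (⊤ : ℕ∞) (devSq γ s) :=
  ContDiff.sum fun a _ => (W.contDiff_dev a).pow 2

lemma contDiff_tube (W : IsWorldline γ s) : ContDiff ℝ (⊤ : ℕ∞) (tube γ s) :=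
  contDiff_smoothTransition.comp (contDiff_const.sub W.contDiff_devSq)

lemma contDiff_shell (W : IsWorldline γ s) (n : ℕ) : ContDiff ℝ (⊤ : ℕ∞) (shell γ s n) :=
  (contDiff_smoothTransition.comp ((contDiff_const.mul W.contDiff_devSq).sub contDiff_const)).mul
    (contDiff_smoothTransition.comp
      (contDiff_const.sub (ContDiff.sum fun a _ => (contDiff_apply ℝ ℝ a).pow 2)))

lemma contDiff_lift (W : IsWorldline γ s) {φ : ℝ → ℝ} (hφ : ContDiff ℝ (⊤ : ℕ∞) φ) :
    ContDiff ℝ (⊤ : ℕ∞) (lift γ s φ) := (W.contDiff_comp_time hφ).mul W.contDiff_tube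

lemma continuous_lift (W : IsWorldline γ s) {φ : ℝ → ℝ} (hφ : Continuous φ) :
    Continuous (lift γ s φ) :=
  (hφ.comp (W.smooth_time.continuous.comp (continuous_apply 0))).mul W.contDiff_tube.continuous

lemma dev_curve (W : IsWorldline γ s) (t : ℝ) (a : Fin 4) : dev γ s (γ t) a = 0 := by
  rw [dev, W.time_curve, sub_self]

lemma devSq_curve (W : IsWorldline γ s) (t : ℝ) : devSq γ s (γ t) = 0 := by
  simp [devSq, W.dev_curve]

lemma tube_curve (W : IsWorldline γ s) (t : ℝ) : tube γ s (γ t) = 1 := by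
  rw [tube, W.devSq_curve, Real.smoothTransition.one_of_one_le (by norm_num)]

lemma lift_curve (W : IsWorldline γ s) (φ : ℝ → ℝ) (t : ℝ) : lift γ s φ (γ t) = φ t := by
  rw [lift, W.tube_curve, W.time_curve, mul_one]

lemma devSq_pos (_ : IsWorldline γ s) {p : Vec4} (hp : p ∉ Set.range γ) : 0 < devSq γ s p := by
  refine (devSq_nonneg γ s p).lt_of_ne fun h => hp ⟨s (p 0), ?_⟩
  have := (Finset.sum_eq_zero_iff_of_nonneg fun _ _ => sq_nonneg _).1 h.symm
  ext a
  have := pow_eq_zero_iff two_ne_zero |>.1 (this a (Finset.mem_univ a))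
  rw [dev] at this
  linarith

lemma eventually_devSq_lt (W : IsWorldline γ s) (t : ℝ) {ε : ℝ} (hε : 0 < ε) :
    ∀ᶠ p in 𝓝 (γ t), devSq γ s p < ε :=
  W.contDiff_devSq.continuous.continuousAt.eventually_lt continuousAt_const
    (by rwa [W.devSq_curve])

lemma eventually_tube_eq_one (W : IsWorldline γ s) (t : ℝ) :
    tube γ s =ᶠ[𝓝 (γ t)] fun _ => 1 := by
  filter_upwards [W.eventually_devSq_lt t one_pos] with p hp
  rw [tube, Real.smoothTransition.one_of_one_le (by linarith)]

lemma eventually_pd_tube (W : IsWorldline γ s) (t : ℝ) (a : Fin 4) :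
    pd a (tube γ s) =ᶠ[𝓝 (γ t)] fun _ => 0 := by
  filter_upwards [(W.eventually_tube_eq_one t).eventually_nhds] with p hp
  rw [pd_congr hp, pd]
  simp

lemma isCompact_slab (W : IsWorldline γ s) {K : Set ℝ} (hK : IsCompact K) :
    IsCompact ((fun x : ℝ × Vec4 => γ x.1 + x.2) '' (K ×ˢ Metric.closedBall 0 2)) :=
  (hK.prod (isCompact_closedBall _ _)).image
    ((W.smooth.continuous.comp continuous_fst).add continuous_snd)

lemma mem_slab (_ : IsWorldline γ s) {K : Set ℝ} {p : Vec4} (hp : s (p 0) ∈ K)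
    (ht : tube γ s p ≠ 0) :
    p ∈ (fun x : ℝ × Vec4 => γ x.1 + x.2) '' (K ×ˢ Metric.closedBall 0 2) := by
  refine ⟨(s (p 0), dev γ s p), ⟨hp, ?_⟩, ?_⟩
  · have h2 : devSq γ s p < 2 := by
      by_contra! h
      exact ht (Real.smoothTransition.zero_of_nonpos (by linarith))
    rw [mem_closedBall_zero_iff, pi_norm_le_iff_of_nonneg (by norm_num)]
    intro a
    have : dev γ s p a ^ 2 ≤ devSq γ s p := Finset.single_le_sum
      (f := fun a => dev γ s p a ^ 2) (fun _ _ => sq_nonneg _) (Finset.mem_univ a)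
    rw [Real.norm_eq_abs]
    exact abs_le_of_sq_le_sq (by linarith) (by norm_num)
  · ext a
    simp [dev]

lemma hasCompactSupport_lift (W : IsWorldline γ s) {φ : ℝ → ℝ} (hφ : HasCompactSupport φ) :
    HasCompactSupport (lift γ s φ) := by
  refine HasCompactSupport.intro (W.isCompact_slab hφ.isCompact) fun p hp => ?_
  by_contra hne
  exact hp (W.mem_slab (subset_tsupport _ (left_ne_zero_of_mul hne)) (right_ne_zero_of_mul hne))

lemma hasCompactSupport_shell (γ : ℝ → Vec4) (s : ℝ → ℝ) (n : ℕ) :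
    HasCompactSupport (shell γ s n) :=
  hasCompactSupport_of_sum_sq (M := n + 1) fun p hp => by
    rw [shell, Real.smoothTransition.zero_of_nonpos (x := n + 1 - _) (by linarith), mul_zero]

lemma pd_comp_time (W : IsWorldline γ s) {φ : ℝ → ℝ} (hφ : ContDiff ℝ (⊤ : ℕ∞) φ) (a : Fin 4)
    (p : Vec4) : pd a (fun p => φ (s (p 0))) p
      = if a = 0 then rate γ s (s (p 0)) * deriv φ (s (p 0)) else 0 := by
  have h1 := ((W.smooth_time.differentiable (by simp)) (p 0))
  have h2 := ((hφ.differentiable (by simp)) (s (p 0)))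
  rw [_root_.pd_comp_time (g := fun r => φ (s r)) (h2.comp (p 0) h1)]
  congr 1
  have := (h2.hasDerivAt.comp (p 0) h1.hasDerivAt).deriv
  rw [← W.deriv_time, mul_comm]
  exact this

lemma pd_lift (W : IsWorldline γ s) {φ : ℝ → ℝ} (hφ : ContDiff ℝ (⊤ : ℕ∞) φ) (a : Fin 4)
    (p : Vec4) : pd a (lift γ s φ) p = φ (s (p 0)) * pd a (tube γ s) p
      + if a = 0 then lift γ s (fun t => rate γ s t * deriv φ t) p else 0 := by
  have e : lift γ s φ = fun p => φ (s (p 0)) * tube γ s p := rfl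
  rw [e, pd_mul ((W.contDiff_comp_time hφ).differentiable (by simp) p)
    (W.contDiff_tube.differentiable (by simp) p), W.pd_comp_time hφ]
  by_cases h : a = 0
  · simp only [h, if_true, lift]; ring
  · simp only [h, if_false]; ring

lemma pd_lift_curve (W : IsWorldline γ s) {φ : ℝ → ℝ} (hφ : ContDiff ℝ (⊤ : ℕ∞) φ) (a : Fin 4)
    (t : ℝ) : pd a (lift γ s φ) (γ t) = if a = 0 then rate γ s t * deriv φ t else 0 := by
  rw [W.pd_lift hφ, (W.eventually_pd_tube t a).eq_of_nhds, W.lift_curve]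
  simp

lemma pd_dev_mul_curve (W : IsWorldline γ s) {ψ : Vec4 → ℝ} (hψ : ContDiff ℝ (⊤ : ℕ∞) ψ)
    (a b : Fin 4) (t : ℝ) : pd b (fun p => dev γ s p a * ψ p) (γ t)
      = (if a = b then ψ (γ t) else 0) - if b = 0 then rate γ s t * deriv γ t a * ψ (γ t) else 0 := by
  rw [pd_mul ((W.contDiff_dev a).differentiable (by simp) _) (hψ.differentiable (by simp) _),
    W.dev_curve]
  have e : (fun p => dev γ s p a) = fun p : Vec4 => p a - (fun t => γ t a) (s (p 0)) := rfl
  rw [e, pd_sub ((contDiff_apply ℝ ℝ a).differentiable (n := (⊤ : ℕ∞)) (by simp) _)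
    ((W.contDiff_comp_time (W.smooth_apply a)).differentiable (by simp) _), pd_coord,
    W.pd_comp_time (W.smooth_apply a), W.time_curve, deriv_apply_of_contDiff W.smooth]
  split_ifs <;> ring

end IsWorldline

/-- Charged matter of charge-to-mass ratio at most `κ` in the electromagnetic field `F`. -/
structure IsChargedMatter (F : Vec4 → Mat4) (κ : ℝ) (T : Vec4 → Mat4) (J : Vec4 → Vec4) :
    Prop where
  smooth : SmoothMatField T
  symm : SymValued T
  dec : ∀ p, DEC (T p)
  smooth_current : ∀ a, ContDiff ℝ (⊤ : ℕ∞) fun p => J p a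
  conserved : ∀ p, ∑ a, pd a (fun q => J q a) p = 0
  force : ∀ p a, ∑ b, pd b (fun q => T q a b) p = ∑ b, (E * F p) a b * J p b
  bound : ∀ p t, UnitTimelike t → |∑ a, J p a * t a| ≤ κ * ∑ a, ∑ b, T p a b * t a * t b

lemma pd_const_mul (a : Fin 4) (c : ℝ) {f : Vec4 → ℝ} {p : Vec4} (hf : DifferentiableAt ℝ f p) :
    pd a (fun q => c * f q) p = c * pd a f p := by
  simp [pd, fderiv_const_mul hf]

lemma integrable_mul_of_hasCompactSupport {f ψ : Vec4 → ℝ} (hf : Continuous f)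
    (hψ : Continuous ψ) (hψc : HasCompactSupport ψ) : Integrable fun p => f p * ψ p :=
  (hf.mul hψ).integrable_of_hasCompactSupport (hψc.mul_left (f := f))

lemma integral_mul_pd {f ψ : Vec4 → ℝ} (hf : ContDiff ℝ (⊤ : ℕ∞) f)
    (hψ : ContDiff ℝ (⊤ : ℕ∞) ψ) (hψc : HasCompactSupport ψ) (a : Fin 4) :
    ∫ p, f p * pd a ψ p = -∫ p, pd a f p * ψ p :=
  integral_mul_fderiv_eq_neg_fderiv_mul_of_integrable
    (integrable_mul_of_hasCompactSupport (contDiff_pd hf a).continuous hψ.continuous hψc)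
    (integrable_mul_of_hasCompactSupport hf.continuous (contDiff_pd hψ a).continuous
      (hasCompactSupport_pd hψc a))
    (integrable_mul_of_hasCompactSupport hf.continuous hψ.continuous hψc)
    (fun p _ => hf.differentiable (by simp) p) (fun p _ => hψ.differentiable (by simp) p)

namespace IsChargedMatter

variable {F : Vec4 → Mat4} {κ : ℝ} {T : Vec4 → Mat4} {J : Vec4 → Vec4}

lemma smul (h : IsChargedMatter F κ T J) {c : ℝ} (hc : 0 ≤ c) :
    IsChargedMatter F κ (fun p => c • T p) (fun p => c • J p) where
  smooth a b := contDiff_const.mul (h.smooth a b)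
  symm p := by rw [transpose_smul, h.symm]
  dec p ξ ζ hξ hζ := by
    have e : ∑ i, ∑ j, ξ i * (c • T p) i j * ζ j = c * ∑ i, ∑ j, ξ i * T p i j * ζ j := by
      simp only [Finset.mul_sum]
      exact Finset.sum_congr rfl fun a _ => Finset.sum_congr rfl fun b _ => by
        simp only [Matrix.smul_apply, smul_eq_mul]; ring
    rw [e]
    exact mul_nonneg hc (h.dec p ξ ζ hξ hζ)
  smooth_current a := contDiff_const.mul (h.smooth_current a)
  conserved p := by
    have : ∀ a, pd a (fun q => (c • J q) a) p = c * pd a (fun q => J q a) p := fun a =>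
      pd_const_mul a c ((h.smooth_current a).differentiable (by simp) p)
    simp only [this, ← Finset.mul_sum, h.conserved, mul_zero]
  force p a := by
    have : ∀ b, pd b (fun q => (c • T q) a b) p = c * pd b (fun q => T q a b) p := fun b =>
      pd_const_mul b c ((h.smooth a b).differentiable (by simp) p)
    simp only [this, ← Finset.mul_sum, h.force, Pi.smul_apply, smul_eq_mul]
    rw [Finset.mul_sum]
    exact Finset.sum_congr rfl fun b _ => by ring
  bound p t ht := by
    have e1 : ∑ a, (c • J p) a * t a = c * ∑ a, J p a * t a := by
      rw [Finset.mul_sum]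
      exact Finset.sum_congr rfl fun a _ => by simp only [Pi.smul_apply, smul_eq_mul]; ring
    have e2 : ∑ a, ∑ b, (c • T p) a b * t a * t b = c * ∑ a, ∑ b, T p a b * t a * t b := by
      simp only [Finset.mul_sum]
      exact Finset.sum_congr rfl fun a _ => Finset.sum_congr rfl fun b _ => by
        simp only [Matrix.smul_apply, smul_eq_mul]; ring
    rw [e1, e2, abs_mul, abs_of_nonneg hc]
    nlinarith [mul_le_mul_of_nonneg_left (h.bound p t ht) hc]

lemma continuous_entry (h : IsChargedMatter F κ T J) (a b : Fin 4) :
    Continuous fun p => T p a b := (h.smooth a b).continuous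

lemma continuous_current (h : IsChargedMatter F κ T J) (a : Fin 4) :
    Continuous fun p => J p a := (h.smooth_current a).continuous

lemma entry_nonneg (h : IsChargedMatter F κ T J) (p : Vec4) : 0 ≤ T p 0 0 := (h.dec p).nonneg

lemma sum_integral_current_mul_pd (h : IsChargedMatter F κ T J) {ψ : Vec4 → ℝ}
    (hψ : ContDiff ℝ (⊤ : ℕ∞) ψ) (hψc : HasCompactSupport ψ) :
    ∑ b, ∫ p, J p b * pd b ψ p = 0 := by
  simp only [integral_mul_pd (h.smooth_current _) hψ hψc, Finset.sum_neg_distrib]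
  rw [← integral_finsetSum _ fun b _ => integrable_mul_of_hasCompactSupport
    (contDiff_pd (h.smooth_current b) b).continuous hψ.continuous hψc]
  simp only [← Finset.sum_mul, h.conserved, zero_mul, integral_zero, neg_zero]

lemma sum_integral_stress_mul_pd (h : IsChargedMatter F κ T J)
    (hF : ∀ a b, Continuous fun p => F p a b) {ψ : Vec4 → ℝ}
    (hψ : ContDiff ℝ (⊤ : ℕ∞) ψ) (hψc : HasCompactSupport ψ) (a : Fin 4) :
    (∑ b, ∫ p, T p a b * pd b ψ p) + ∑ b, ∫ p, J p b * ((E * F p) a b * ψ p) = 0 := by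
  have hEF : ∀ b, Continuous fun p => (E * F p) a b := fun b => by
    simp only [Matrix.mul_apply]
    exact continuous_finsetSum _ fun i _ => continuous_const.mul (hF i b)
  have e : ∀ b, ∫ p, T p a b * pd b ψ p = -∫ p, pd b (fun q => T q a b) p * ψ p := fun b =>
    integral_mul_pd (h.smooth a b) hψ hψc b
  have e2 : ∑ b, ∫ p, J p b * ((E * F p) a b * ψ p) = ∫ p, ∑ b, J p b * ((E * F p) a b * ψ p) :=
    (integral_finsetSum _ fun b _ => integrable_mul_of_hasCompactSupport
      (h.continuous_current b) ((hEF b).mul hψ.continuous)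
      (hψc.mul_left (f := fun p => (E * F p) a b))).symm
  have e3 : ∀ p, ∑ b, J p b * ((E * F p) a b * ψ p) = ∑ b, pd b (fun q => T q a b) p * ψ p := by
    intro p
    rw [← Finset.sum_mul, h.force, Finset.sum_mul]
    exact Finset.sum_congr rfl fun b _ => by ring
  simp only [e, e2, e3, Finset.sum_neg_distrib]
  rw [← integral_finsetSum _ fun b _ => integrable_mul_of_hasCompactSupport
    (contDiff_pd (h.smooth a b) b).continuous hψ.continuous hψc, neg_add_cancel]

end IsChargedMatter

/-- A sequence of charged matter fields, normalized at the start of the curve, whose energy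
concentrates on the curve. -/
structure IsConcentrating (γ : ℝ → Vec4) (s : ℝ → ℝ) (F : Vec4 → Mat4) (κ : ℝ) (b : ℝ → ℝ)
    (T : ℕ → Vec4 → Mat4) (J : ℕ → Vec4 → Vec4) : Prop where
  matter : ∀ n, IsChargedMatter F κ (T n) (J n)
  normalized : ∀ n, ∫ p, T n p 0 0 * lift γ s (fun t => rate γ s t ^ 2 * b t) p = 1
  shell_le : ∀ n : ℕ, ∫ p, T n p 0 0 * shell γ s n p ≤ 1 / (n + 1 : ℝ)

lemma exists_matter_of_tracks {γ : ℝ → Vec4} {s : ℝ → ℝ} (W : IsWorldline γ s) {F : Vec4 → Mat4}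
    {κ : ℝ} {b : ℝ → ℝ} (hb : IsTest b) (hb0 : 0 < b 0)
    {C : Set ((Vec4 → Mat4) × (Vec4 → Vec4))} (hC : ∀ TJ ∈ C, IsChargedMatter F κ TJ.1 TJ.2)
    (htr : Tracks (Prod.fst '' C) γ) (hb' : ∀ t, 0 ≤ b t) (n : ℕ) :
    ∃ T J, IsChargedMatter F κ T J ∧
      ∫ p, T p 0 0 * lift γ s (fun t => rate γ s t ^ 2 * b t) p = 1 ∧
      ∫ p, T p 0 0 * shell γ s n p ≤ 1 / (n + 1 : ℝ) := by
  set β := lift γ s (fun t => rate γ s t ^ 2 * b t) with hβ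
  have hβt : IsTest fun t => rate γ s t ^ 2 * b t := hb.mul_left (W.smooth_rate.pow 2)
  have hβs : ContDiff ℝ (⊤ : ℕ∞) β := W.contDiff_lift hβt.1
  have hβc : HasCompactSupport β := W.hasCompactSupport_lift hβt.2
  have hβ0 : ∀ p, 0 ≤ β p := fun p =>
    mul_nonneg (mul_nonneg (sq_nonneg _) (hb' _)) (tube_nonneg _ _ _)
  set g : Vec4 → ℝ := fun p => β p - (n + 1) * shell γ s n p with hg
  have hgs : ContDiff ℝ (⊤ : ℕ∞) g := hβs.sub (contDiff_const.mul (W.contDiff_shell n))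
  have hgc : HasCompactSupport g :=
    hβc.sub ((IsWorldline.hasCompactSupport_shell γ s n).mul_left (f := fun _ => (n + 1 : ℝ)))
  obtain ⟨_, ⟨⟨T, J⟩, hTJ, rfl⟩, hpos⟩ := htr (fun p => g p • timeMat)
    (fun a b => hgs.mul contDiff_const) (hgc.smul_right (f' := fun _ => timeMat))
    (fun p => by rw [transpose_smul, timeMat_transpose])
    ⟨{p | n * devSq γ s p < 1},
      isOpen_lt (continuous_const.mul W.contDiff_devSq.continuous) continuous_const, by
        rintro _ ⟨t, rfl⟩
        simp [W.devSq_curve],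
      fun p hp => coneD_smul (by
        simp only [hg, shell_eq_zero hp, mul_zero, sub_zero]
        exact hβ0 p) timeMat_mem_coneD⟩
    ⟨0, generic_smul_timeMat (by
      have h1 : g (γ 0) = rate γ s 0 ^ 2 * b 0 := by
        simp only [hg, shell_eq_zero (γ := γ) (s := s) (n := n) (p := γ 0)
          (by simp [W.devSq_curve]), hβ, W.lift_curve, mul_zero, sub_zero]
      have h2 : rate γ s 0 ≠ 0 := left_ne_zero_of_mul_eq_one (W.rate_mul_velocity 0)
      rw [h1]
      positivity)⟩
  have hM := hC _ hTJ
  simp only [minner_smul_timeMat] at hpos hM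
  have hTc := hM.continuous_entry 0 0
  have hi1 := integrable_mul_of_hasCompactSupport hTc hβs.continuous hβc
  have hi2 := integrable_mul_of_hasCompactSupport hTc (W.contDiff_shell n).continuous
    (IsWorldline.hasCompactSupport_shell γ s n)
  set w := ∫ p, T p 0 0 * β p with hw
  set v := ∫ p, T p 0 0 * shell γ s n p with hv
  have hv0 : 0 ≤ v := integral_nonneg fun p => mul_nonneg (hM.entry_nonneg p) (shell_nonneg _ _ _ _)
  have hsplit : ∫ p, T p 0 0 * g p = w - (n + 1) * v := by
    rw [hw, hv, ← integral_const_mul, ← integral_sub hi1 (hi2.const_mul _)]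
    congr 1
    ext p
    simp only [hg]
    ring
  rw [hsplit] at hpos
  have hn : (0 : ℝ) < n + 1 := by positivity
  have hw0 : 0 < w := by nlinarith [mul_nonneg hn.le hv0]
  refine ⟨_, _, hM.smul (c := w⁻¹) (by positivity), ?_, ?_⟩
  · simp only [Matrix.smul_apply, smul_eq_mul, mul_assoc, integral_const_mul]
    exact inv_mul_cancel₀ hw0.ne'
  · simp only [Matrix.smul_apply, smul_eq_mul, mul_assoc, integral_const_mul]
    rw [← hv, inv_mul_eq_div, div_le_div_iff₀ hw0 hn]
    linarith

lemma exists_isConcentrating {γ : ℝ → Vec4} {s : ℝ → ℝ} (W : IsWorldline γ s) {F : Vec4 → Mat4}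
    {κ : ℝ} {b : ℝ → ℝ} (hb : IsTest b) (hb0 : 0 < b 0)
    {C : Set ((Vec4 → Mat4) × (Vec4 → Vec4))} (hC : ∀ TJ ∈ C, IsChargedMatter F κ TJ.1 TJ.2)
    (htr : Tracks (Prod.fst '' C) γ) (hb' : ∀ t, 0 ≤ b t) :
    ∃ T J, IsConcentrating γ s F κ b T J := by
  choose T J h1 h2 h3 using exists_matter_of_tracks W hb hb0 hC htr hb'
  exact ⟨T, J, h1, h2, h3⟩

/-- A neighbourhood of `S` eventually carries a bounded amount of energy. -/
def MassBoundedOn (T : ℕ → Vec4 → Mat4) (S : Set Vec4) : Prop :=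
  ∃ g : Vec4 → ℝ, Continuous g ∧ HasCompactSupport g ∧ (∀ p, 0 ≤ g p) ∧ (∀ p ∈ S, 1 ≤ g p) ∧
    ∃ M, ∀ᶠ n in atTop, ∫ p, T n p 0 0 * g p ≤ M

lemma abs_integral_mul_le {f ρ ψ : Vec4 → ℝ} {c : ℝ} (hf : Continuous f) (hρ : Continuous ρ)
    (h : ∀ p, |f p| ≤ c * ρ p) (hψ : Continuous ψ) (hψc : HasCompactSupport ψ) :
    |∫ p, f p * ψ p| ≤ c * ∫ p, ρ p * |ψ p| := by
  refine (abs_integral_le_integral_abs (f := fun p => f p * ψ p)).trans ?_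
  rw [← integral_const_mul]
  refine integral_mono (integrable_mul_of_hasCompactSupport hf hψ hψc).abs
    ((integrable_mul_of_hasCompactSupport hρ hψ.abs hψc.abs).const_mul _) fun p => ?_
  simp only [abs_mul]
  nlinarith [mul_le_mul_of_nonneg_right (h p) (abs_nonneg (ψ p))]

namespace IsConcentrating

variable {γ : ℝ → Vec4} {s : ℝ → ℝ} {F : Vec4 → Mat4} {κ : ℝ} {b : ℝ → ℝ}
  {T : ℕ → Vec4 → Mat4} {J : ℕ → Vec4 → Vec4}

lemma integrable (H : IsConcentrating γ s F κ b T J) (n : ℕ) {ψ : Vec4 → ℝ} (hψ : Continuous ψ)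
    (hψc : HasCompactSupport ψ) : Integrable fun p => T n p 0 0 * ψ p :=
  integrable_mul_of_hasCompactSupport ((H.matter n).continuous_entry 0 0) hψ hψc

lemma mass_mono (H : IsConcentrating γ s F κ b T J) (n : ℕ) {ψ χ : Vec4 → ℝ} (hψ : Continuous ψ)
    (hψc : HasCompactSupport ψ) (hχ : Continuous χ) (hχc : HasCompactSupport χ)
    (h : ∀ p, ψ p ≤ χ p) : ∫ p, T n p 0 0 * ψ p ≤ ∫ p, T n p 0 0 * χ p :=
  integral_mono (H.integrable n hψ hψc) (H.integrable n hχ hχc) fun p =>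
    mul_le_mul_of_nonneg_left (h p) ((H.matter n).entry_nonneg p)

lemma mass_nonneg (H : IsConcentrating γ s F κ b T J) (n : ℕ) {ψ : Vec4 → ℝ}
    (h : ∀ p, 0 ≤ ψ p) : 0 ≤ ∫ p, T n p 0 0 * ψ p :=
  integral_nonneg fun p => mul_nonneg ((H.matter n).entry_nonneg p) (h p)

lemma tendsto_mass_of_eventuallyEq (H : IsConcentrating γ s F κ b T J) (W : IsWorldline γ s)
    {ψ : Vec4 → ℝ} (hψ : Continuous ψ) (hψc : HasCompactSupport ψ)
    (h : ∀ t, ψ =ᶠ[𝓝 (γ t)] 0) :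
    Tendsto (fun n => ∫ p, T n p 0 0 * |ψ p|) atTop (𝓝 0) := by
  have hpos : ∀ p ∈ tsupport ψ, 0 < devSq γ s p := fun p hp => W.devSq_pos (by
    rintro ⟨t, rfl⟩
    exact notMem_tsupport_iff_eventuallyEq.2 (h t) hp)
  obtain ⟨δ, hδ, hδ'⟩ := hψc.isCompact.exists_forall_le' W.contDiff_devSq.continuous.continuousOn
    hpos
  obtain ⟨M, hM⟩ := hψc.exists_bound_of_continuous hψ
  obtain ⟨R, hR⟩ := hψc.isCompact.exists_bound_of_continuousOn
    (f := fun p : Vec4 => ∑ a, p a ^ 2) (by fun_prop)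
  have hM0 : 0 ≤ M := (norm_nonneg _).trans (hM 0)
  refine squeeze_zero' (g := fun n : ℕ => M * (1 / (n + 1 : ℝ)))
    (Eventually.of_forall fun n => H.mass_nonneg n fun p => abs_nonneg _) ?_
    (by simpa using tendsto_one_div_add_atTop_nhds_zero_nat.const_mul M)
  filter_upwards [eventually_ge_atTop ⌈2 / δ⌉₊, eventually_ge_atTop ⌈R⌉₊] with n hn1 hn2
  have hn1 := Nat.ceil_le.1 hn1
  have hn2 := Nat.ceil_le.1 hn2
  rw [div_le_iff₀ hδ] at hn1
  refine (H.mass_mono n hψ.abs hψc.abs (continuous_const.mul (W.contDiff_shell n).continuous)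
    ((IsWorldline.hasCompactSupport_shell γ s n).mul_left (f := fun _ => M)) fun p => ?_).trans ?_
  · by_cases hp : p ∈ tsupport ψ
    · have h1 := hδ' p hp
      have h2 := (le_abs_self _).trans (hR p hp)
      have h3 : shell γ s n p = 1 :=
        shell_eq_one (by nlinarith [(Nat.cast_nonneg n : (0 : ℝ) ≤ n)]) (h2.trans hn2)
      simp only [Pi.mul_apply, h3, mul_one]
      exact hM p
    · rw [image_eq_zero_of_notMem_tsupport hp, abs_zero]
      exact mul_nonneg hM0 (shell_nonneg _ _ _ _)
  · simp only [Pi.mul_apply, mul_left_comm _ M, integral_const_mul]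
    exact mul_le_mul_of_nonneg_left (H.shell_le n) hM0

lemma massBoundedOn_union (H : IsConcentrating γ s F κ b T J) {S S' : Set Vec4}
    (hS : MassBoundedOn T S) (hS' : MassBoundedOn T S') : MassBoundedOn T (S ∪ S') := by
  obtain ⟨g, h1, h2, h3, h4, M, h5⟩ := hS
  obtain ⟨g', h1', h2', h3', h4', M', h5'⟩ := hS'
  refine ⟨fun p => g p + g' p, h1.add h1', h2.add h2', fun p => add_nonneg (h3 p) (h3' p), ?_,
    M + M', ?_⟩
  · rintro p (hp | hp)
    · linarith [h4 p hp, h3' p]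
    · linarith [h4' p hp, h3 p]
  · filter_upwards [h5, h5'] with n hn hn'
    simp only [mul_add]
    rw [integral_add (H.integrable n h1 h2) (H.integrable n h1' h2')]
    exact add_le_add hn hn'

lemma exists_massBoundedOn_of_pos {g : Vec4 → ℝ} (hg : Continuous g) (hgc : HasCompactSupport g)
    (hg0 : ∀ p, 0 ≤ g p) {M : ℝ} (hM : ∀ᶠ n in atTop, ∫ p, T n p 0 0 * g p ≤ M) {p : Vec4}
    (hp : 0 < g p) : ∃ S ∈ 𝓝 p, MassBoundedOn T S := by
  refine ⟨{q | g p / 2 < g q}, continuousAt_const.eventually_lt hg.continuousAt (by linarith),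
    fun q => 2 / g p * g q, continuous_const.mul hg, hgc.mul_left (f := fun _ => 2 / g p),
    fun q => mul_nonneg (by positivity) (hg0 q), fun q hq => ?_, 2 / g p * M, ?_⟩
  · have hq' : g p / 2 < g q := hq
    change 1 ≤ 2 / g p * g q
    rw [div_mul_eq_mul_div, one_le_div hp]
    linarith
  · filter_upwards [hM] with n hn
    simp only [mul_left_comm _ (2 / g p), integral_const_mul]
    exact mul_le_mul_of_nonneg_left hn (by positivity)

lemma exists_force_bound (H : IsConcentrating γ s F κ b T J) (W : IsWorldline γ s)
    (hrate : ∀ t, 0 < rate γ s t) (hκ : 0 ≤ κ) (hF : ∀ a c, Continuous fun p => F p a c) (R : ℝ) :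
    ∃ C, ∀ n p, |s (p 0)| ≤ R → tube γ s p ≠ 0 →
      |∑ c, J n p c * (E * F p) 0 c| ≤ C * (rate γ s (s (p 0)) * T n p 0 0) := by
  have hEF : ∀ c, Continuous fun p => (E * F p) 0 c := fun c => by
    simp only [Matrix.mul_apply]
    exact continuous_finsetSum _ fun i _ => continuous_const.mul (hF i c)
  obtain ⟨M, hM⟩ := (W.isCompact_slab (isCompact_Icc (a := -R) (b := R))).exists_bound_of_continuousOn
    (f := fun p : Vec4 => (∑ c, |(E * F p) 0 c|) * deriv γ (s (p 0)) 0)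
    ((continuous_finsetSum _ fun c _ => (hEF c).abs).mul
      (W.contDiff_comp_time (W.smooth_velocity 0)).continuous).continuousOn
  refine ⟨7 * κ * M, fun n p hp ht => ?_⟩
  have h1 := (le_abs_self _).trans (hM p (W.mem_slab (abs_le.1 hp) ht))
  have h2 := W.rate_mul_velocity (s (p 0))
  have h3 : ∑ c, |(E * F p) 0 c| ≤ M * rate γ s (s (p 0)) := by
    have := mul_le_mul_of_nonneg_right h1 (hrate (s (p 0))).le
    rwa [mul_assoc, mul_comm (deriv γ _ 0), h2, mul_one] at this
  have h4 : |∑ c, J n p c * (E * F p) 0 c| ≤ 7 * κ * T n p 0 0 * ∑ c, |(E * F p) 0 c| := by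
    refine (Finset.abs_sum_le_sum_abs _ _).trans ?_
    rw [Finset.mul_sum]
    refine Finset.sum_le_sum fun c _ => ?_
    rw [abs_mul]
    exact mul_le_mul_of_nonneg_right
      (abs_current_le ((H.matter n).dec p) hκ ((H.matter n).bound p) c) (abs_nonneg _)
  refine h4.trans ((mul_le_mul_of_nonneg_left h3 ?_).trans_eq (by ring))
  have := (H.matter n).entry_nonneg p
  positivity

lemma hasCompactSupport_of_abs {φ : ℝ → ℝ} {R : ℝ} (h : ∀ r, R ≤ |r| → φ r = 0) :
    HasCompactSupport φ :=
  HasCompactSupport.intro (isCompact_Icc (a := -R) (b := R)) fun r hr => h r (by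
    by_contra! hlt
    exact hr (abs_le.1 hlt.le))

lemma exists_massBoundedOn_curve (H : IsConcentrating γ s F κ b T J) (W : IsWorldline γ s)
    (hrate : ∀ t, 0 < rate γ s t) (hκ : 0 ≤ κ) (hF : ∀ a c, Continuous fun p => F p a c)
    (hb : IsTest b) (hb0 : ∀ t, 0 ≤ b t) (hb1 : ∀ t, |t| ≤ 1 → b t = 1) (t₁ : ℝ) :
    ∃ S ∈ 𝓝 (γ t₁), MassBoundedOn T S := by
  have hβt : IsTest fun t => rate γ s t ^ 2 * b t := hb.mul_left (W.smooth_rate.pow 2)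
  have hβs := (W.contDiff_lift hβt.1).continuous
  have hβc := W.hasCompactSupport_lift hβt.2
  have hβ0 : ∀ p, 0 ≤ lift γ s (fun t => rate γ s t ^ 2 * b t) p := fun p =>
    mul_nonneg (mul_nonneg (sq_nonneg _) (hb0 _)) (tube_nonneg _ _ _)
  by_cases ht : t₁ = 0
  · subst ht
    refine exists_massBoundedOn_of_pos hβs hβc hβ0 (M := 1)
      (Eventually.of_forall fun n => (H.normalized n).le) ?_
    rw [W.lift_curve, hb1 0 (by simp)]
    have := hrate 0
    positivity
  obtain ⟨C, hC⟩ := H.exists_force_bound W hrate hκ hF (2 * |t₁| + 1)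
  obtain ⟨k₁, k₀, h, hs, hk₁, hk₀, hk₁0, hk₁p, hk₀0, hk₀s, hsupp, hk₁s, hid⟩ := exists_transport C ht
  have hk₁c : HasCompactSupport fun t => rate γ s t * k₁ t :=
    (hasCompactSupport_of_abs hk₁s).mul_left (f := rate γ s)
  have hgcont := W.continuous_lift (W.smooth_rate.continuous.mul hk₁)
  have hgc := W.hasCompactSupport_lift hk₁c
  obtain ⟨N, hN⟩ := (isCompact_Icc (a := (-1 : ℝ)) (b := 1)).exists_bound_of_continuousOn
    (f := fun t => k₀ t * deriv γ t 0) (hk₀.mul (W.smooth_velocity 0).continuous).continuousOn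
  have hk₀b : ∀ t, k₀ t ≤ N * (rate γ s t * b t) := by
    intro t
    rcases le_total |t| 1 with h1 | h1
    · have h2 := (le_abs_self _).trans (hN t (abs_le.1 h1))
      have h3 := mul_le_mul_of_nonneg_right h2 (hrate t).le
      rw [mul_assoc, mul_comm (deriv γ _ 0), W.rate_mul_velocity, mul_one] at h3
      rw [hb1 t h1, mul_one]
      exact h3
    · rw [hk₀s t h1]
      have hN0 : 0 ≤ N := (norm_nonneg _).trans (hN 0 (by simp))
      exact mul_nonneg hN0 (mul_nonneg (hrate t).le (hb0 t))
  have hht : IsTest h := ⟨hs.of_le (by simp), hasCompactSupport_of_abs hsupp⟩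
  have hls := W.contDiff_lift hht.1
  have hlc := W.hasCompactSupport_lift hht.2
  set ψ : Fin 4 → Vec4 → ℝ := fun c p => h (s (p 0)) * pd c (tube γ s) p with hψ
  have hψs : ∀ c, Continuous (ψ c) := fun c =>
    (W.contDiff_comp_time hht.1).continuous.mul (contDiff_pd W.contDiff_tube c).continuous
  have hψc : ∀ c, HasCompactSupport (ψ c) := fun c => by
    have h1 := hasCompactSupport_pd hlc c
    have h2 := W.hasCompactSupport_lift (hht.deriv.mul_left W.smooth_rate).2
    by_cases hc : c = 0
    · have e : ψ c = pd c (lift γ s h) - lift γ s (fun t => rate γ s t * deriv h t) := by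
        ext p
        simp [W.pd_lift hht.1, hc, hψ]
      rw [e]
      exact h1.sub h2
    · have e : ψ c = pd c (lift γ s h) := by
        ext p
        simp [W.pd_lift hht.1, hc, hψ]
      rw [e]
      exact h1
  have hψ0 : ∀ c t, ψ c =ᶠ[𝓝 (γ t)] 0 := fun c t => by
    filter_upwards [W.eventually_pd_tube t c] with p hp
    simp [hψ, hp]
  have hlim : Tendsto (fun n => N + ∑ c, ∫ p, T n p 0 0 * |ψ c p|) atTop (𝓝 (N + ∑ _c : Fin 4, 0)) :=
    tendsto_const_nhds.add (tendsto_finsetSum _ fun c _ =>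
      H.tendsto_mass_of_eventuallyEq W (hψs c) (hψc c) (hψ0 c))
  refine exists_massBoundedOn_of_pos hgcont hgc (fun p => mul_nonneg
    (mul_nonneg (hrate _).le (hk₁0 _)) (tube_nonneg _ _ _)) (M := N + 1) ?_
    (by rw [W.lift_curve]; exact mul_pos (hrate _) hk₁p)
  filter_upwards [hlim.eventually (gt_mem_nhds (show N + ∑ _c : Fin 4, (0 : ℝ) < N + 1 by simp))]
    with n hn
  refine le_trans ?_ hn.le
  have hid0 := (H.matter n).sum_integral_stress_mul_pd hF hls hlc 0
  have hEF : ∀ c, Continuous fun p => (E * F p) 0 c := fun c => by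
    simp only [Matrix.mul_apply]
    exact continuous_finsetSum _ fun i _ => continuous_const.mul (hF i c)
  have i1 : ∀ c, Integrable fun p => T n p 0 c * pd c (lift γ s h) p := fun c =>
    integrable_mul_of_hasCompactSupport ((H.matter n).continuous_entry 0 c)
      (contDiff_pd hls c).continuous (hasCompactSupport_pd hlc c)
  have i2 : ∀ c, Integrable fun p => J n p c * ((E * F p) 0 c * lift γ s h p) := fun c =>
    integrable_mul_of_hasCompactSupport ((H.matter n).continuous_current c)
      ((hEF c).mul hls.continuous) (hlc.mul_left (f := fun p => (E * F p) 0 c))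
  have i3 : ∀ c, Integrable fun p => T n p 0 0 * |ψ c p| := fun c =>
    H.integrable n (hψs c).abs (hψc c).abs
  have i4 := H.integrable n hβs hβc
  rw [← integral_finsetSum _ fun c _ => i1 c, ← integral_finsetSum _ fun c _ => i2 c,
    ← integral_add (integrable_finsetSum _ fun c _ => i1 c)
      (integrable_finsetSum _ fun c _ => i2 c)] at hid0
  have i5 : Integrable fun p => ∑ c, T n p 0 c * pd c (lift γ s h) p
      + ∑ c, J n p c * ((E * F p) 0 c * lift γ s h p) :=
    (integrable_finsetSum _ fun c _ => i1 c).add (integrable_finsetSum _ fun c _ => i2 c)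
  have i6 : Integrable fun p => ∑ c, T n p 0 0 * |ψ c p| :=
    integrable_finsetSum _ fun c _ => i3 c
  have i7 : Integrable fun p => N * (T n p 0 0 * lift γ s (fun t => rate γ s t ^ 2 * b t) p)
      - (∑ c, T n p 0 c * pd c (lift γ s h) p
        + ∑ c, J n p c * ((E * F p) 0 c * lift γ s h p)) := (i4.const_mul N).sub i5
  have hsum : ∫ p, (N * (T n p 0 0 * lift γ s (fun t => rate γ s t ^ 2 * b t) p)
      - (∑ c, T n p 0 c * pd c (lift γ s h) p + ∑ c, J n p c * ((E * F p) 0 c * lift γ s h p))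
      + ∑ c, T n p 0 0 * |ψ c p|) = N + ∑ c, ∫ p, T n p 0 0 * |ψ c p| := by
    rw [integral_add i7 i6, integral_sub (i4.const_mul N) i5, hid0, integral_const_mul,
      H.normalized, integral_finsetSum _ fun c _ => i3 c]
    ring
  rw [← hsum]
  refine integral_mono (H.integrable n hgcont hgc) (i7.add i6) fun p => ?_
  have hρ := (H.matter n).entry_nonneg p
  have hτ := tube_nonneg γ s p
  have b1 : ∑ c, T n p 0 c * pd c (lift γ s h) p
      ≤ T n p 0 0 * lift γ s (fun t => rate γ s t * deriv h t) p
        + ∑ c, T n p 0 0 * |ψ c p| := by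
    have e : ∀ c, T n p 0 c * pd c (lift γ s h) p = (if c = 0 then T n p 0 c *
        lift γ s (fun t => rate γ s t * deriv h t) p else 0) + T n p 0 c * ψ c p := by
      intro c
      rw [W.pd_lift hht.1]
      split_ifs <;> simp only [hψ] <;> ring
    simp only [e, Finset.sum_add_distrib, Finset.sum_ite_eq', Finset.mem_univ, if_true]
    refine add_le_add_right (Finset.sum_le_sum fun c _ => ?_) _
    refine (le_abs_self _).trans ?_
    rw [abs_mul]
    exact mul_le_mul_of_nonneg_right (((H.matter n).dec p).abs_le 0 c) (abs_nonneg _)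
  have b2 : ∑ c, J n p c * ((E * F p) 0 c * lift γ s h p)
      ≤ C * (rate γ s (s (p 0)) * T n p 0 0) * (|h (s (p 0))| * tube γ s p) := by
    have e : ∑ c, J n p c * ((E * F p) 0 c * lift γ s h p)
        = (∑ c, J n p c * (E * F p) 0 c) * lift γ s h p := by
      rw [Finset.sum_mul]
      exact Finset.sum_congr rfl fun c _ => by ring
    have hl : |lift γ s h p| = |h (s (p 0))| * tube γ s p := by
      rw [lift, abs_mul, abs_of_nonneg hτ]
    rw [e]
    refine (le_abs_self _).trans ?_
    rw [abs_mul, hl]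
    by_cases h0 : |h (s (p 0))| * tube γ s p = 0
    · simp [h0]
    · refine mul_le_mul_of_nonneg_right (hC n p ?_ (right_ne_zero_of_mul h0)) (by positivity)
      by_contra! hlt
      exact left_ne_zero_of_mul h0 (by rw [hsupp _ hlt.le, abs_zero])
  have b3 : T n p 0 0 * lift γ s (fun t => rate γ s t * k₁ t) p
      ≤ N * (T n p 0 0 * lift γ s (fun t => rate γ s t ^ 2 * b t) p)
        - T n p 0 0 * lift γ s (fun t => rate γ s t * deriv h t) p
        - C * (rate γ s (s (p 0)) * T n p 0 0) * (|h (s (p 0))| * tube γ s p) := by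
    have h1 := hid (s (p 0))
    have h2 := hk₀b (s (p 0))
    have h3 : k₁ (s (p 0)) ≤ N * (rate γ s (s (p 0)) * b (s (p 0))) - deriv h (s (p 0))
        - C * |h (s (p 0))| := by linarith
    have h4 : 0 ≤ T n p 0 0 * (rate γ s (s (p 0)) * tube γ s p) :=
      mul_nonneg hρ (mul_nonneg (hrate _).le hτ)
    have h5 := mul_le_mul_of_nonneg_left h3 h4
    simp only [lift]
    linarith
  have b4 : (rate γ s * k₁) = fun t => rate γ s t * k₁ t := rfl
  rw [b4]
  linarith

lemma exists_massBoundedOn (H : IsConcentrating γ s F κ b T J) (W : IsWorldline γ s)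
    (hrate : ∀ t, 0 < rate γ s t) (hκ : 0 ≤ κ) (hF : ∀ a c, Continuous fun p => F p a c)
    (hb : IsTest b) (hb0 : ∀ t, 0 ≤ b t) (hb1 : ∀ t, |t| ≤ 1 → b t = 1) (p : Vec4) :
    ∃ S ∈ 𝓝 p, MassBoundedOn T S := by
  by_cases hp : p ∈ Set.range γ
  · obtain ⟨t, rfl⟩ := hp
    exact H.exists_massBoundedOn_curve W hrate hκ hF hb hb0 hb1 t
  have hpos := W.devSq_pos hp
  obtain ⟨m, hm⟩ := exists_nat_ge (max (2 / devSq γ s p) (∑ a, p a ^ 2))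
  have hm1 := (le_max_left _ _).trans hm
  rw [div_le_iff₀ hpos] at hm1
  refine exists_massBoundedOn_of_pos (W.contDiff_shell m).continuous
    (IsWorldline.hasCompactSupport_shell γ s m) (shell_nonneg γ s m) (M := 1) ?_
    (by rw [shell_eq_one hm1 ((le_max_right _ _).trans hm)]; exact one_pos)
  filter_upwards [eventually_ge_atTop m] with n hn
  refine (H.mass_mono n (W.contDiff_shell m).continuous
    (IsWorldline.hasCompactSupport_shell γ s m) (W.contDiff_shell n).continuous
    (IsWorldline.hasCompactSupport_shell γ s n) (shell_mono γ s hn)).trans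
    ((H.shell_le n).trans ?_)
  rw [div_le_one (by positivity)]
  linarith [(Nat.cast_nonneg n : (0 : ℝ) ≤ n)]

lemma massBoundedOn_of_isCompact (H : IsConcentrating γ s F κ b T J)
    (h : ∀ p, ∃ S ∈ 𝓝 p, MassBoundedOn T S) {K : Set Vec4} (hK : IsCompact K) :
    MassBoundedOn T K := by
  refine hK.induction_on (p := MassBoundedOn T)
    ⟨0, continuous_const, HasCompactSupport.zero, fun _ => le_rfl, fun _ h => h.elim, 0, by simp⟩
    ?_ (fun S S' => H.massBoundedOn_union) fun p _ => ?_
  · rintro S S' hS ⟨g, h1, h2, h3, h4, h5⟩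
    exact ⟨g, h1, h2, h3, fun p hp => h4 p (hS hp), h5⟩
  · obtain ⟨S, hS, h'⟩ := h p
    exact ⟨S, mem_nhdsWithin_of_mem_nhds hS, h'⟩

lemma tendsto_mass_of_vanishing (H : IsConcentrating γ s F κ b T J) (W : IsWorldline γ s)
    (h : ∀ p, ∃ S ∈ 𝓝 p, MassBoundedOn T S) {ψ : Vec4 → ℝ} (hψ : Continuous ψ)
    (hψc : HasCompactSupport ψ) (h0 : ∀ t, ψ (γ t) = 0) :
    Tendsto (fun n => ∫ p, T n p 0 0 * |ψ p|) atTop (𝓝 0) := by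
  obtain ⟨g, hg, hgc, hg0, hg1, M, hM⟩ := H.massBoundedOn_of_isCompact h hψc.isCompact
  refine tendsto_order.2 ⟨fun a ha => Eventually.of_forall fun n =>
    ha.trans_le (H.mass_nonneg n fun p => abs_nonneg _), fun δ hδ => ?_⟩
  set ε : ℝ := δ / (2 * (|M| + 1)) with hε
  have hε0 : 0 < ε := by positivity
  have hψεc : HasCompactSupport fun p => max (|ψ p| - ε) 0 :=
    hψc.comp_left (g := fun x => max (|x| - ε) 0) (by simp [hε0.le])
  have hψε : Continuous fun p => max (|ψ p| - ε) 0 := by fun_prop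
  have hlim := H.tendsto_mass_of_eventuallyEq W hψε hψεc fun t => by
    have : ∀ᶠ p in 𝓝 (γ t), |ψ p| < ε :=
      hψ.abs.continuousAt.eventually_lt continuousAt_const (by rwa [h0, abs_zero])
    filter_upwards [this] with p hp
    exact max_eq_right (by linarith)
  filter_upwards [hlim.eventually (gt_mem_nhds (half_pos hδ)), hM] with n hn hn'
  have hle : ∀ p, |ψ p| ≤ |max (|ψ p| - ε) 0| + ε * g p := by
    intro p
    rw [abs_of_nonneg (le_max_right (|ψ p| - ε) 0)]
    by_cases hp : p ∈ tsupport ψ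
    · nlinarith [hg1 p hp, le_max_left (|ψ p| - ε) 0]
    · rw [image_eq_zero_of_notMem_tsupport hp, abs_zero]
      exact add_nonneg (le_max_right _ _) (mul_nonneg hε0.le (hg0 p))
  have h1 := H.mass_mono n hψ.abs hψc.abs (hψε.abs.add (continuous_const.mul hg))
    (hψεc.abs.add (hgc.mul_left (f := fun _ => ε))) hle
  have h2 : ∫ p, T n p 0 0 * (|max (|ψ p| - ε) 0| + ε * g p)
      = (∫ p, T n p 0 0 * |max (|ψ p| - ε) 0|) + ε * ∫ p, T n p 0 0 * g p := by
    rw [← integral_const_mul, ← integral_add (H.integrable n hψε.abs hψεc.abs)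
      ((H.integrable n hg hgc).const_mul _)]
    congr 1
    ext p
    ring
  have h3 : ε * ∫ p, T n p 0 0 * g p ≤ δ / 2 := by
    have : ε * (|M| + 1) = δ / 2 := by rw [hε]; field_simp
    rw [← this]
    exact mul_le_mul_of_nonneg_left (by linarith [le_abs_self M]) hε0.le
  calc _ ≤ _ := h1
    _ = _ := h2
    _ < δ := by linarith

lemma tendsto_entry (H : IsConcentrating γ s F κ b T J) (W : IsWorldline γ s)
    (h : ∀ p, ∃ S ∈ 𝓝 p, MassBoundedOn T S) {ψ : Vec4 → ℝ} (hψ : Continuous ψ)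
    (hψc : HasCompactSupport ψ) (h0 : ∀ t, ψ (γ t) = 0) (a c : Fin 4) :
    Tendsto (fun n => ∫ p, T n p a c * ψ p) atTop (𝓝 0) := by
  refine squeeze_zero_norm (fun n => ?_)
    (by simpa using (H.tendsto_mass_of_vanishing W h hψ hψc h0).const_mul 1)
  simpa using abs_integral_mul_le (c := 1) ((H.matter n).continuous_entry a c)
    ((H.matter n).continuous_entry 0 0)
    (fun p => by simpa using ((H.matter n).dec p).abs_le a c) hψ hψc

lemma tendsto_current (H : IsConcentrating γ s F κ b T J) (W : IsWorldline γ s) (hκ : 0 ≤ κ)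
    (h : ∀ p, ∃ S ∈ 𝓝 p, MassBoundedOn T S) {ψ : Vec4 → ℝ} (hψ : Continuous ψ)
    (hψc : HasCompactSupport ψ) (h0 : ∀ t, ψ (γ t) = 0) (a : Fin 4) :
    Tendsto (fun n => ∫ p, J n p a * ψ p) atTop (𝓝 0) := by
  refine squeeze_zero_norm (fun n => ?_)
    (by simpa using (H.tendsto_mass_of_vanishing W h hψ hψc h0).const_mul (7 * κ))
  exact abs_integral_mul_le ((H.matter n).continuous_current a)
    ((H.matter n).continuous_entry 0 0)
    (fun p => abs_current_le ((H.matter n).dec p) hκ ((H.matter n).bound p) a) hψ hψc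

end IsConcentrating

/-- Integration of a field against a function of the curve parameter extended to spacetime. -/
def pairing (γ : ℝ → Vec4) (s : ℝ → ℝ) (f : Vec4 → ℝ) (φ : ℝ → ℝ) : ℝ :=
  ∫ p, f p * lift γ s φ p

/-- The distribution of mass along the curve. -/
def massPairing (γ : ℝ → Vec4) (s : ℝ → ℝ) (T : Vec4 → Mat4) (φ : ℝ → ℝ) : ℝ :=
  pairing γ s (fun p => T p 0 0) fun t => rate γ s t ^ 2 * φ t

/-- The distribution of charge along the curve. -/
def chargePairing (γ : ℝ → Vec4) (s : ℝ → ℝ) (J : Vec4 → Vec4) (φ : ℝ → ℝ) : ℝ :=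
  pairing γ s (fun p => J p 0) fun t => rate γ s t * φ t

lemma pairing_zero (γ : ℝ → Vec4) (s : ℝ → ℝ) (f : Vec4 → ℝ) :
    pairing γ s f (fun _ => 0) = 0 := by simp [pairing, lift]

lemma pairing_const_mul (γ : ℝ → Vec4) (s : ℝ → ℝ) (f : Vec4 → ℝ) (c : ℝ) (φ : ℝ → ℝ) :
    pairing γ s f (fun t => c * φ t) = c * pairing γ s f φ := by
  rw [pairing, pairing, ← integral_const_mul]
  congr 1
  ext p
  simp only [lift]
  ring

lemma massPairing_const_mul (γ : ℝ → Vec4) (s : ℝ → ℝ) (T : Vec4 → Mat4) (c : ℝ) (φ : ℝ → ℝ) :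
    massPairing γ s T (fun t => c * φ t) = c * massPairing γ s T φ := by
  simp only [massPairing, mul_left_comm _ c, pairing_const_mul]

lemma chargePairing_const_mul (γ : ℝ → Vec4) (s : ℝ → ℝ) (J : Vec4 → Vec4) (c : ℝ) (φ : ℝ → ℝ) :
    chargePairing γ s J (fun t => c * φ t) = c * chargePairing γ s J φ := by
  simp only [chargePairing, mul_left_comm _ c, pairing_const_mul]

section

variable {γ : ℝ → Vec4} {s : ℝ → ℝ}

lemma IsWorldline.integrable_mul_lift (W : IsWorldline γ s) {f : Vec4 → ℝ} (hf : Continuous f)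
    {φ : ℝ → ℝ} (hφ : IsTest φ) : Integrable fun p => f p * lift γ s φ p :=
  integrable_mul_of_hasCompactSupport hf (W.contDiff_lift hφ.1).continuous
    (W.hasCompactSupport_lift hφ.2)

lemma IsWorldline.pairing_sum (W : IsWorldline γ s) {f : Vec4 → ℝ} (hf : Continuous f)
    {ι : Type*} (S : Finset ι) {φ : ι → ℝ → ℝ} (hφ : ∀ i, IsTest (φ i)) :
    pairing γ s f (fun t => ∑ i ∈ S, φ i t) = ∑ i ∈ S, pairing γ s f (φ i) := by
  simp only [pairing]
  rw [← integral_finsetSum _ fun i _ => W.integrable_mul_lift hf (hφ i)]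
  congr 1
  ext p
  simp only [lift, Finset.sum_mul, Finset.mul_sum]

lemma IsWorldline.pairing_add (W : IsWorldline γ s) {f : Vec4 → ℝ} (hf : Continuous f)
    {φ χ : ℝ → ℝ} (hφ : IsTest φ) (hχ : IsTest χ) :
    pairing γ s f (fun t => φ t + χ t) = pairing γ s f φ + pairing γ s f χ := by
  simp only [pairing]
  rw [← integral_add (W.integrable_mul_lift hf hφ) (W.integrable_mul_lift hf hχ)]
  congr 1
  ext p
  simp only [lift]
  ring

lemma IsWorldline.pairing_sub (W : IsWorldline γ s) {f : Vec4 → ℝ} (hf : Continuous f)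
    {φ χ : ℝ → ℝ} (hφ : IsTest φ) (hχ : IsTest χ) :
    pairing γ s f (fun t => φ t - χ t) = pairing γ s f φ - pairing γ s f χ := by
  have h := W.pairing_add hf hφ (hχ.mul_left (g := fun _ => -1) contDiff_const)
  rw [pairing_const_mul] at h
  rw [sub_eq_add_neg, ← neg_one_mul, ← h]
  congr 1
  ext t
  ring

lemma IsWorldline.massPairing_sum (W : IsWorldline γ s) {T : Vec4 → Mat4}
    (hT : Continuous fun p => T p 0 0) {ι : Type*} (S : Finset ι) {φ : ι → ℝ → ℝ}
    (hφ : ∀ i, IsTest (φ i)) :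
    massPairing γ s T (fun t => ∑ i ∈ S, φ i t) = ∑ i ∈ S, massPairing γ s T (φ i) := by
  simp only [massPairing, Finset.mul_sum]
  exact W.pairing_sum hT S fun i => (hφ i).mul_left (W.smooth_rate.pow 2)

lemma IsWorldline.chargePairing_sum (W : IsWorldline γ s) {J : Vec4 → Vec4}
    (hJ : Continuous fun p => J p 0) {ι : Type*} (S : Finset ι) {φ : ι → ℝ → ℝ}
    (hφ : ∀ i, IsTest (φ i)) :
    chargePairing γ s J (fun t => ∑ i ∈ S, φ i t) = ∑ i ∈ S, chargePairing γ s J (φ i) := by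
  simp only [chargePairing, Finset.mul_sum]
  exact W.pairing_sum hJ S fun i => (hφ i).mul_left W.smooth_rate

lemma IsWorldline.massPairing_add (W : IsWorldline γ s) {T : Vec4 → Mat4}
    (hT : Continuous fun p => T p 0 0) {φ χ : ℝ → ℝ} (hφ : IsTest φ) (hχ : IsTest χ) :
    massPairing γ s T (fun t => φ t + χ t) = massPairing γ s T φ + massPairing γ s T χ := by
  simp only [massPairing, mul_add]
  exact W.pairing_add hT (hφ.mul_left (W.smooth_rate.pow 2)) (hχ.mul_left (W.smooth_rate.pow 2))

lemma IsWorldline.chargePairing_add (W : IsWorldline γ s) {J : Vec4 → Vec4}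
    (hJ : Continuous fun p => J p 0) {φ χ : ℝ → ℝ} (hφ : IsTest φ) (hχ : IsTest χ) :
    chargePairing γ s J (fun t => φ t + χ t) = chargePairing γ s J φ + chargePairing γ s J χ := by
  simp only [chargePairing, mul_add]
  exact W.pairing_add hJ (hφ.mul_left W.smooth_rate) (hχ.mul_left W.smooth_rate)

/-- The restriction to the curve of the gradient of `dev a * lift φ`, paired with a vector field. -/
lemma IsWorldline.sum_pairing_dev (W : IsWorldline γ s) {f : Fin 4 → Vec4 → ℝ}
    (hf : ∀ c, Continuous (f c)) {φ χ : ℝ → ℝ} (hφ : IsTest φ) (hχ : IsTest χ) (a : Fin 4) :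
    ∑ c, pairing γ s (f c)
      (fun t => (if a = c then φ t else 0) - if c = 0 then χ t else 0)
      = pairing γ s (f a) φ - pairing γ s (f 0) χ := by
  have h0 : IsTest fun _ => (0 : ℝ) := ⟨contDiff_const, HasCompactSupport.zero⟩
  have e : ∀ c, pairing γ s (f c)
      (fun t => (if a = c then φ t else 0) - if c = 0 then χ t else 0)
      = (if a = c then pairing γ s (f c) φ else 0) - if c = 0 then pairing γ s (f c) χ else 0 := by
    intro c
    split_ifs
    · exact W.pairing_sub (hf c) hφ hχ
    · simp only [sub_zero]
    · rw [W.pairing_sub (hf c) h0 hχ, pairing_zero]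
    · simp only [sub_zero, pairing_zero]
  simp only [e, Finset.sum_sub_distrib, Finset.sum_ite_eq, Finset.sum_ite_eq', Finset.mem_univ,
    if_true]

end

namespace IsConcentrating

variable {γ : ℝ → Vec4} {s : ℝ → ℝ} {F : Vec4 → Mat4} {κ : ℝ} {b : ℝ → ℝ}
  {T : ℕ → Vec4 → Mat4} {J : ℕ → Vec4 → Vec4}

lemma tendsto_pairing_entry_sub (H : IsConcentrating γ s F κ b T J) (W : IsWorldline γ s)
    (h : ∀ p, ∃ S ∈ 𝓝 p, MassBoundedOn T S) {ψ : Vec4 → ℝ} (hψ : Continuous ψ)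
    (hψc : HasCompactSupport ψ) {φ : ℝ → ℝ} (hφ : IsTest φ) (h0 : ∀ t, ψ (γ t) = φ t)
    (a c : Fin 4) :
    Tendsto (fun n => pairing γ s (fun p => T n p a c) φ - ∫ p, T n p a c * ψ p) atTop (𝓝 0) := by
  have hl := (W.contDiff_lift hφ.1).continuous
  have hlc := W.hasCompactSupport_lift hφ.2
  refine (H.tendsto_entry W h (hl.sub hψ) (hlc.sub hψc)
    (fun t => by simp [W.lift_curve, h0]) a c).congr fun n => ?_
  have hc := (H.matter n).continuous_entry a c
  rw [pairing, ← integral_sub (integrable_mul_of_hasCompactSupport hc hl hlc)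
    (integrable_mul_of_hasCompactSupport hc hψ hψc)]
  simp only [mul_sub, Pi.sub_apply]

lemma tendsto_pairing_current_sub (H : IsConcentrating γ s F κ b T J) (W : IsWorldline γ s)
    (hκ : 0 ≤ κ) (h : ∀ p, ∃ S ∈ 𝓝 p, MassBoundedOn T S) {ψ : Vec4 → ℝ} (hψ : Continuous ψ)
    (hψc : HasCompactSupport ψ) {φ : ℝ → ℝ} (hφ : IsTest φ) (h0 : ∀ t, ψ (γ t) = φ t)
    (a : Fin 4) :
    Tendsto (fun n => pairing γ s (fun p => J n p a) φ - ∫ p, J n p a * ψ p) atTop (𝓝 0) := by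
  have hl := (W.contDiff_lift hφ.1).continuous
  have hlc := W.hasCompactSupport_lift hφ.2
  refine (H.tendsto_current W hκ h (hl.sub hψ) (hlc.sub hψc)
    (fun t => by simp [W.lift_curve, h0]) a).congr fun n => ?_
  have hc := (H.matter n).continuous_current a
  rw [pairing, ← integral_sub (integrable_mul_of_hasCompactSupport hc hl hlc)
    (integrable_mul_of_hasCompactSupport hc hψ hψc)]
  simp only [mul_sub, Pi.sub_apply]

lemma tendsto_conservation (H : IsConcentrating γ s F κ b T J) (W : IsWorldline γ s)
    (hκ : 0 ≤ κ) (h : ∀ p, ∃ S ∈ 𝓝 p, MassBoundedOn T S) {ψ : Vec4 → ℝ}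
    (hψ : ContDiff ℝ (⊤ : ℕ∞) ψ) (hψc : HasCompactSupport ψ) {φ : Fin 4 → ℝ → ℝ}
    (hφ : ∀ c, IsTest (φ c)) (h0 : ∀ c t, pd c ψ (γ t) = φ c t) :
    Tendsto (fun n => ∑ c, pairing γ s (fun p => J n p c) (φ c)) atTop (𝓝 0) := by
  have := tendsto_finsetSum Finset.univ fun c _ =>
    H.tendsto_pairing_current_sub W hκ h (contDiff_pd hψ c).continuous
      (hasCompactSupport_pd hψc c) (hφ c) (h0 c) c
  simpa only [Finset.sum_sub_distrib, (H.matter _).sum_integral_current_mul_pd hψ hψc, sub_zero,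
    Finset.sum_const_zero] using this

lemma tendsto_balance (H : IsConcentrating γ s F κ b T J) (W : IsWorldline γ s)
    (hκ : 0 ≤ κ) (h : ∀ p, ∃ S ∈ 𝓝 p, MassBoundedOn T S)
    (hF : ∀ a c, ContDiff ℝ (⊤ : ℕ∞) fun p => F p a c) {ψ : Vec4 → ℝ}
    (hψ : ContDiff ℝ (⊤ : ℕ∞) ψ) (hψc : HasCompactSupport ψ) {φ : Fin 4 → ℝ → ℝ} {χ : ℝ → ℝ}
    (hφ : ∀ c, IsTest (φ c)) (hχ : IsTest χ) (h0 : ∀ c t, pd c ψ (γ t) = φ c t)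
    (h1 : ∀ t, ψ (γ t) = χ t) (a : Fin 4) :
    Tendsto (fun n => (∑ c, pairing γ s (fun p => T n p a c) (φ c))
      + ∑ c, pairing γ s (fun p => J n p c) fun t => (E * F (γ t)) a c * χ t) atTop (𝓝 0) := by
  have hEF : ∀ c, ContDiff ℝ (⊤ : ℕ∞) fun p => (E * F p) a c := fun c => by
    simp only [Matrix.mul_apply]
    exact ContDiff.sum fun i _ => contDiff_const.mul (hF i c)
  have l1 := tendsto_finsetSum Finset.univ fun c _ =>
    H.tendsto_pairing_entry_sub W h (contDiff_pd hψ c).continuous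
      (hasCompactSupport_pd hψc c) (hφ c) (h0 c) a c
  have l2 := tendsto_finsetSum Finset.univ fun c _ =>
    H.tendsto_pairing_current_sub W hκ h (ψ := fun p => (E * F p) a c * ψ p)
      ((hEF c).continuous.mul hψ.continuous) (hψc.mul_left (f := fun p => (E * F p) a c)) (φ := fun t => (E * F (γ t)) a c * χ t)
      (hχ.mul_left ((hEF c).comp W.smooth)) (fun t => by simp [h1]) c
  have l3 := l1.add l2
  simp only [Finset.sum_const_zero, add_zero] at l3
  refine l3.congr fun n => ?_
  have := (H.matter n).sum_integral_stress_mul_pd (fun a c => (hF a c).continuous) hψ hψc a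
  simp only [Finset.sum_sub_distrib]
  linarith

lemma tendsto_chargePairing_deriv (H : IsConcentrating γ s F κ b T J) (W : IsWorldline γ s)
    (hκ : 0 ≤ κ) (h : ∀ p, ∃ S ∈ 𝓝 p, MassBoundedOn T S) {φ : ℝ → ℝ} (hφ : IsTest φ) :
    Tendsto (fun n => chargePairing γ s (J n) (deriv φ)) atTop (𝓝 0) := by
  have h1 : IsTest fun t => rate γ s t * deriv φ t := hφ.deriv.mul_left W.smooth_rate
  refine (H.tendsto_conservation W hκ h (W.contDiff_lift hφ.1) (W.hasCompactSupport_lift hφ.2)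
    (φ := fun c t => if c = 0 then rate γ s t * deriv φ t else 0) (fun c => ?_)
    (W.pd_lift_curve hφ.1)).congr fun n => ?_
  · split_ifs
    · exact h1
    · exact ⟨contDiff_const, HasCompactSupport.zero⟩
  · rw [Finset.sum_eq_single 0 (fun c _ hc => by simp only [hc, if_false, pairing_zero]) (by simp)]
    simp only [if_true, chargePairing]

lemma contDiff_dev_mul_lift (W : IsWorldline γ s) {φ : ℝ → ℝ} (hφ : IsTest φ) (a : Fin 4) :
    ContDiff ℝ (⊤ : ℕ∞) fun p => dev γ s p a * lift γ s φ p :=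
  (W.contDiff_dev a).mul (W.contDiff_lift hφ.1)

lemma hasCompactSupport_dev_mul_lift (W : IsWorldline γ s) {φ : ℝ → ℝ} (hφ : IsTest φ)
    (a : Fin 4) : HasCompactSupport fun p => dev γ s p a * lift γ s φ p :=
  (W.hasCompactSupport_lift hφ.2).mul_left (f := fun p => dev γ s p a)

lemma isTest_pd_dev (W : IsWorldline γ s) {φ : ℝ → ℝ} (hφ : IsTest φ) (a c : Fin 4) :
    IsTest fun t => (if a = c then φ t else 0)
      - if c = 0 then rate γ s t * (deriv γ t a * φ t) else 0 := by
  have h0 : IsTest fun _ => (0 : ℝ) := ⟨contDiff_const, HasCompactSupport.zero⟩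
  have h1 := (hφ.mul_left (W.smooth_velocity a)).mul_left W.smooth_rate
  have h2 : IsTest fun t => if a = c then φ t else 0 := by split_ifs <;> assumption
  have h3 : IsTest fun t => if c = 0 then rate γ s t * (deriv γ t a * φ t) else 0 := by
    split_ifs <;> assumption
  exact ⟨h2.1.sub h3.1, h2.2.sub h3.2⟩

lemma tendsto_pairing_current (H : IsConcentrating γ s F κ b T J) (W : IsWorldline γ s)
    (hκ : 0 ≤ κ) (h : ∀ p, ∃ S ∈ 𝓝 p, MassBoundedOn T S) {φ : ℝ → ℝ} (hφ : IsTest φ)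
    (a : Fin 4) :
    Tendsto (fun n => pairing γ s (fun p => J n p a) φ
      - chargePairing γ s (J n) fun t => deriv γ t a * φ t) atTop (𝓝 0) := by
  refine (H.tendsto_conservation W hκ h (contDiff_dev_mul_lift W hφ a)
    (hasCompactSupport_dev_mul_lift W hφ a) (isTest_pd_dev W hφ a) fun c t => ?_).congr fun n => ?_
  · rw [W.pd_dev_mul_curve (W.contDiff_lift hφ.1), W.lift_curve, mul_assoc]
  · exact W.sum_pairing_dev (f := fun c p => J n p c) (fun c => (H.matter n).continuous_current c)
      hφ ((hφ.mul_left (W.smooth_velocity a)).mul_left W.smooth_rate) a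

lemma tendsto_pairing_entry_row (H : IsConcentrating γ s F κ b T J) (W : IsWorldline γ s)
    (hκ : 0 ≤ κ) (h : ∀ p, ∃ S ∈ 𝓝 p, MassBoundedOn T S)
    (hF : ∀ a c, ContDiff ℝ (⊤ : ℕ∞) fun p => F p a c) {φ : ℝ → ℝ} (hφ : IsTest φ)
    (a c : Fin 4) :
    Tendsto (fun n => pairing γ s (fun p => T n p a c) φ
      - pairing γ s (fun p => T n p a 0) fun t => rate γ s t * (deriv γ t c * φ t))
      atTop (𝓝 0) := by
  refine (H.tendsto_balance W hκ h hF (contDiff_dev_mul_lift W hφ c)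
    (hasCompactSupport_dev_mul_lift W hφ c) (χ := fun _ => 0) (isTest_pd_dev W hφ c)
    ⟨contDiff_const, HasCompactSupport.zero⟩ (fun d t => ?_) (fun t => ?_) a).congr fun n => ?_
  · rw [W.pd_dev_mul_curve (W.contDiff_lift hφ.1), W.lift_curve, mul_assoc]
  · rw [W.dev_curve, zero_mul]
  · simp only [mul_zero, pairing_zero, Finset.sum_const_zero, add_zero]
    exact W.sum_pairing_dev (f := fun d p => T n p a d)
      (fun d => (H.matter n).continuous_entry a d)
      hφ ((hφ.mul_left (W.smooth_velocity c)).mul_left W.smooth_rate) c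

lemma tendsto_pairing_entry (H : IsConcentrating γ s F κ b T J) (W : IsWorldline γ s)
    (hκ : 0 ≤ κ) (h : ∀ p, ∃ S ∈ 𝓝 p, MassBoundedOn T S)
    (hF : ∀ a c, ContDiff ℝ (⊤ : ℕ∞) fun p => F p a c) {φ : ℝ → ℝ} (hφ : IsTest φ)
    (a c : Fin 4) :
    Tendsto (fun n => pairing γ s (fun p => T n p a c) φ
      - massPairing γ s (T n) fun t => deriv γ t a * deriv γ t c * φ t) atTop (𝓝 0) := by
  have h1 := (hφ.mul_left (W.smooth_velocity c)).mul_left W.smooth_rate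
  have l1 := H.tendsto_pairing_entry_row W hκ h hF hφ a c
  have l2 := H.tendsto_pairing_entry_row W hκ h hF h1 0 a
  have l3 := l1.add l2
  rw [add_zero] at l3
  refine l3.congr fun n => ?_
  have e1 : (fun p => T n p a 0) = fun p => T n p 0 a := by
    ext p
    conv_lhs => rw [← (H.matter n).symm p, transpose_apply]
  have e2 : (fun t => rate γ s t * (deriv γ t a * (rate γ s t * (deriv γ t c * φ t))))
      = fun t => rate γ s t ^ 2 * (deriv γ t a * deriv γ t c * φ t) := by
    ext t
    ring
  rw [massPairing, e1, e2]
  ring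

end IsConcentrating

lemma rate_pos {γ : ℝ → Vec4} {s : ℝ → ℝ} (W : IsWorldline γ s)
    (htl : ∀ t : ℝ, FutureTimelike (deriv γ t)) (t : ℝ) : 0 < rate γ s t :=
  pos_of_mul_pos_left (by rw [W.rate_mul_velocity]; exact one_pos) (htl t).2.le

lemma sum_E_mul (u v : Vec4) : ∑ a, u a * (E a a * v a) = mink u v := by
  simp [Fin.sum_univ_four, E, mink]
  ring

lemma unitTimelike_lower {u : Vec4} (h : FutureTimelike u) (h1 : mink u u = 1) :
    UnitTimelike fun a => E a a * u a := by
  have e : mink (fun a => E a a * u a) (fun a => E a a * u a) = mink u u := by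
    simp [mink, E]
  refine ⟨⟨by rw [e]; exact h.1, ?_⟩, by rw [e, h1]⟩
  simpa [E] using h.2

lemma sum_lorentz_mul_lower {A : Mat4} (hA : Aᵀ = -A) (u : Vec4) :
    ∑ a, (∑ c, (E * A) a c * u c) * (E a a * u a) = 0 := by
  have h : ∀ i j, A j i = -A i j := fun i j => by
    rw [← transpose_apply A i j, hA, Matrix.neg_apply]
  have hd : ∀ i, A i i = 0 := fun i => by linarith [h i i]
  simp [Fin.sum_univ_four, E, Matrix.diagonal_mul, hd, h 0 1, h 0 2, h 0 3, h 1 2, h 1 3, h 2 3]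
  ring

namespace IsConcentrating

variable {γ : ℝ → Vec4} {s : ℝ → ℝ} {F : Vec4 → Mat4} {κ : ℝ} {b : ℝ → ℝ}
  {T : ℕ → Vec4 → Mat4} {J : ℕ → Vec4 → Vec4}

lemma contDiff_force (W : IsWorldline γ s) (hF : ∀ a c, ContDiff ℝ (⊤ : ℕ∞) fun p => F p a c)
    (a c : Fin 4) : ContDiff ℝ (⊤ : ℕ∞) fun t => (E * F (γ t)) a c := by
  simp only [Matrix.mul_apply]
  exact ContDiff.sum fun i _ => contDiff_const.mul ((hF i c).comp W.smooth)

lemma tendsto_force (H : IsConcentrating γ s F κ b T J) (W : IsWorldline γ s)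
    (hκ : 0 ≤ κ) (h : ∀ p, ∃ S ∈ 𝓝 p, MassBoundedOn T S)
    (hF : ∀ a c, ContDiff ℝ (⊤ : ℕ∞) fun p => F p a c) (a : Fin 4) {φ : ℝ → ℝ} (hφ : IsTest φ) :
    Tendsto (fun n => massPairing γ s (T n) (fun t => deriv γ t a * deriv φ t)
      + chargePairing γ s (J n) fun t => (∑ c, (E * F (γ t)) a c * deriv γ t c) * φ t)
      atTop (𝓝 0) := by
  have h1 : IsTest fun t => rate γ s t * deriv φ t := hφ.deriv.mul_left W.smooth_rate
  have h2 : ∀ c, IsTest fun t => (E * F (γ t)) a c * φ t := fun c =>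
    hφ.mul_left (contDiff_force W hF a c)
  have l1 := H.tendsto_balance W hκ h hF (W.contDiff_lift hφ.1) (W.hasCompactSupport_lift hφ.2)
    (φ := fun c t => if c = 0 then rate γ s t * deriv φ t else 0) (χ := φ) (fun c => by
      split_ifs
      · exact h1
      · exact ⟨contDiff_const, HasCompactSupport.zero⟩) hφ (W.pd_lift_curve hφ.1) (W.lift_curve φ) a
  have l2 := H.tendsto_pairing_entry W hκ h hF h1 a 0
  have l3 := tendsto_finsetSum Finset.univ fun c _ => H.tendsto_pairing_current W hκ h (h2 c) c
  have l4 := (l1.sub l2).sub l3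
  simp only [Finset.sum_const_zero, sub_zero] at l4
  refine l4.congr fun n => ?_
  have e1 : ∑ c, pairing γ s (fun p => T n p a c)
      (fun t => if c = 0 then rate γ s t * deriv φ t else 0)
      = pairing γ s (fun p => T n p a 0) fun t => rate γ s t * deriv φ t := by
    rw [Finset.sum_eq_single 0 (fun c _ hc => by simp only [hc, if_false, pairing_zero]) (by simp)]
    simp only [if_true]
  have e2 : (fun t => deriv γ t a * deriv γ t 0 * (rate γ s t * deriv φ t))
      = fun t => deriv γ t a * deriv φ t := by
    ext t
    linear_combination deriv γ t a * deriv φ t * W.rate_mul_velocity t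
  have e3 : (fun t => (∑ c, (E * F (γ t)) a c * deriv γ t c) * φ t)
      = fun t => ∑ c, deriv γ t c * ((E * F (γ t)) a c * φ t) := by
    ext t
    rw [Finset.sum_mul]
    exact Finset.sum_congr rfl fun c _ => by ring
  rw [e1, e2, e3, W.chargePairing_sum ((H.matter n).continuous_current 0) Finset.univ
    fun c => (h2 c).mul_left (W.smooth_velocity c), Finset.sum_sub_distrib]
  ring

lemma tendsto_massPairing_deriv (H : IsConcentrating γ s F κ b T J) (W : IsWorldline γ s)
    (hκ : 0 ≤ κ) (h : ∀ p, ∃ S ∈ 𝓝 p, MassBoundedOn T S)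
    (hF : ∀ a c, ContDiff ℝ (⊤ : ℕ∞) fun p => F p a c) (hFa : ∀ p, (F p)ᵀ = -(F p))
    (hunit : ∀ t, mink (deriv γ t) (deriv γ t) = 1) {φ : ℝ → ℝ} (hφ : IsTest φ) :
    Tendsto (fun n => massPairing γ s (T n) (deriv φ)) atTop (𝓝 0) := by
  have h1 : ∀ a, IsTest fun t => E a a * deriv γ t a * φ t := fun a =>
    hφ.mul_left (contDiff_const.mul (W.smooth_velocity a))
  have l := tendsto_finsetSum Finset.univ fun a _ => H.tendsto_force W hκ h hF a (h1 a)
  rw [Finset.sum_const_zero] at l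
  refine l.congr fun n => ?_
  have hforce : ∀ a, ContDiff ℝ (⊤ : ℕ∞) fun t => ∑ c, (E * F (γ t)) a c * deriv γ t c :=
    fun a => ContDiff.sum fun c _ => (contDiff_force W hF a c).mul (W.smooth_velocity c)
  rw [Finset.sum_add_distrib, ← W.massPairing_sum ((H.matter n).continuous_entry 0 0) Finset.univ
    fun a => (h1 a).deriv.mul_left (W.smooth_velocity a),
    ← W.chargePairing_sum ((H.matter n).continuous_current 0) Finset.univ
      fun a => (h1 a).mul_left (hforce a)]
  have e1 : (fun t => ∑ a, (∑ c, (E * F (γ t)) a c * deriv γ t c) * (E a a * deriv γ t a * φ t))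
      = fun t => 0 * (0 : ℝ) := by
    ext t
    have := congrArg (· * φ t) (sum_lorentz_mul_lower (hFa (γ t)) (deriv γ t))
    simp only [Finset.sum_mul _ _ (φ t), zero_mul] at this
    rw [zero_mul, ← this]
    exact Finset.sum_congr rfl fun a _ => by ring
  have e2 : (fun t => ∑ a, deriv γ t a * deriv (fun t => E a a * deriv γ t a * φ t) t)
      = deriv φ := by
    ext t
    have hu : ∀ a, HasDerivAt (fun t => deriv γ t a) (deriv (fun t => deriv γ t a) t) t :=
      fun a => ((W.smooth_velocity a).differentiable (by simp) t).hasDerivAt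
    have hp : HasDerivAt φ (deriv φ t) t := (hφ.1.differentiable (by simp) t).hasDerivAt
    have hd : ∀ a, deriv (fun t => E a a * deriv γ t a * φ t) t
        = E a a * deriv (fun t => deriv γ t a) t * φ t + E a a * deriv γ t a * deriv φ t :=
      fun a => (((hu a).const_mul (E a a)).mul hp).deriv
    have hm : HasDerivAt (fun t => ∑ a, deriv γ t a * (E a a * deriv γ t a))
        (∑ a, (deriv (fun t => deriv γ t a) t * (E a a * deriv γ t a)
          + deriv γ t a * (E a a * deriv (fun t => deriv γ t a) t))) t :=
      HasDerivAt.fun_sum fun a _ => (hu a).mul ((hu a).const_mul (E a a))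
    simp only [sum_E_mul, hunit] at hm
    have hz := hm.unique (hasDerivAt_const t 1)
    have h2 := (sum_E_mul (deriv γ t) (deriv γ t)).trans (hunit t)
    simp only [hd]
    simp only [Fin.sum_univ_four] at hz h2 ⊢
    linear_combination φ t / 2 * hz + deriv φ t * h2
  rw [e1, e2, chargePairing_const_mul, zero_mul, add_zero]

lemma eventually_abs_chargePairing_le (H : IsConcentrating γ s F κ b T J) (W : IsWorldline γ s)
    (hκ : 0 ≤ κ) (h : ∀ p, ∃ S ∈ 𝓝 p, MassBoundedOn T S)
    (hF : ∀ a c, ContDiff ℝ (⊤ : ℕ∞) fun p => F p a c)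
    (hunit : ∀ t, mink (deriv γ t) (deriv γ t) = 1) (htl : ∀ t, FutureTimelike (deriv γ t))
    (hb : IsTest b) (hb0 : ∀ t, 0 ≤ b t) {ε : ℝ} (hε : 0 < ε) :
    ∀ᶠ n in atTop, |chargePairing γ s (J n) b| ≤ κ + ε := by
  set v : ℝ → Vec4 := fun t a => E a a * deriv γ t a with hv
  have hvs : ∀ a, ContDiff ℝ (⊤ : ℕ∞) fun t => v t a := fun a =>
    contDiff_const.mul (W.smooth_velocity a)
  have h1 : ∀ a, IsTest fun t => v t a * b t := fun a => hb.mul_left (hvs a)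
  have h2 : ∀ a c, IsTest fun t => v t a * (v t c * b t) := fun a c => (h1 c).mul_left (hvs a)
  have hnorm : ∀ t, ∑ a, deriv γ t a * v t a = 1 := fun t => by
    rw [← hunit t, ← sum_E_mul]
  have lq := tendsto_finsetSum Finset.univ fun a _ => H.tendsto_pairing_current W hκ h (h1 a) a
  have lm := tendsto_finsetSum Finset.univ fun a _ => tendsto_finsetSum Finset.univ fun c _ =>
    H.tendsto_pairing_entry W hκ h hF (h2 a c) a c
  simp only [Finset.sum_const_zero, Finset.sum_sub_distrib] at lq lm
  have hq : ∀ n, ∑ a, chargePairing γ s (J n) (fun t => deriv γ t a * (v t a * b t))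
      = chargePairing γ s (J n) b := fun n => by
    rw [← W.chargePairing_sum ((H.matter n).continuous_current 0) Finset.univ
      fun a => (h1 a).mul_left (W.smooth_velocity a)]
    congr 1
    ext t
    simp only [← mul_assoc, ← Finset.sum_mul, hnorm, one_mul]
  have hm : ∀ n, ∑ a, ∑ c, massPairing γ s (T n)
      (fun t => deriv γ t a * deriv γ t c * (v t a * (v t c * b t))) = 1 := fun n => by
    have ht : ∀ a c, IsTest fun t => deriv γ t a * deriv γ t c * (v t a * (v t c * b t)) :=
      fun a c => (h2 a c).mul_left ((W.smooth_velocity a).mul (W.smooth_velocity c))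
    rw [← Finset.sum_product', ← W.massPairing_sum ((H.matter n).continuous_entry 0 0) _
      fun x : Fin 4 × Fin 4 => ht x.1 x.2]
    have e : (fun t => ∑ x ∈ (Finset.univ : Finset (Fin 4)) ×ˢ (Finset.univ : Finset (Fin 4)),
        deriv γ t x.1 * deriv γ t x.2 * (v t x.1 * (v t x.2 * b t))) = b := by
      ext t
      rw [Finset.sum_product]
      calc _ = ∑ a, ∑ c, (deriv γ t a * v t a) * ((deriv γ t c * v t c) * b t) :=
            Finset.sum_congr rfl fun a _ => Finset.sum_congr rfl fun c _ => by ring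
        _ = b t := by simp only [← Finset.mul_sum, ← Finset.sum_mul, hnorm, one_mul]
    rw [e]
    exact H.normalized n
  have hle : ∀ n, |∑ a, pairing γ s (fun p => J n p a) fun t => v t a * b t|
      ≤ κ * ∑ a, ∑ c, pairing γ s (fun p => T n p a c) fun t => v t a * (v t c * b t) := by
    intro n
    have i1 := fun a => W.integrable_mul_lift ((H.matter n).continuous_current a) (h1 a)
    have i2 := fun a c => W.integrable_mul_lift ((H.matter n).continuous_entry a c) (h2 a c)
    have i3 := fun a => integrable_finsetSum Finset.univ fun c _ => i2 a c
    have e1 : ∑ a, pairing γ s (fun p => J n p a) (fun t => v t a * b t)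
        = ∫ p, ∑ a, J n p a * lift γ s (fun t => v t a * b t) p :=
      (integral_finsetSum _ fun a _ => i1 a).symm
    have e2 : ∑ a, ∑ c, pairing γ s (fun p => T n p a c) (fun t => v t a * (v t c * b t))
        = ∫ p, ∑ a, ∑ c, T n p a c * lift γ s (fun t => v t a * (v t c * b t)) p := by
      rw [integral_finsetSum _ fun a _ => i3 a]
      exact Finset.sum_congr rfl fun a _ => (integral_finsetSum _ fun c _ => i2 a c).symm
    rw [e1, e2, ← integral_const_mul]
    refine abs_integral_le_integral_abs.trans (integral_mono
      (integrable_finsetSum _ fun a _ => i1 a).abs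
      ((integrable_finsetSum _ fun a _ => i3 a).const_mul κ) fun p => ?_)
    have hβ : 0 ≤ lift γ s b p := mul_nonneg (hb0 _) (tube_nonneg _ _ _)
    have hbd := mul_le_mul_of_nonneg_right ((H.matter n).bound p _
      (unitTimelike_lower (htl (s (p 0))) (hunit (s (p 0))))) hβ
    rw [← abs_of_nonneg hβ, ← abs_mul, abs_of_nonneg hβ, mul_assoc] at hbd
    simp only [Finset.sum_mul] at hbd
    have e3 : ∑ a, J n p a * lift γ s (fun t => v t a * b t) p
        = ∑ a, J n p a * (E a a * deriv γ (s (p 0)) a) * lift γ s b p :=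
      Finset.sum_congr rfl fun a _ => by simp only [lift, hv]; ring
    have e4 : ∑ a, ∑ c, T n p a c * lift γ s (fun t => v t a * (v t c * b t)) p
        = ∑ a, ∑ c, T n p a c * (E a a * deriv γ (s (p 0)) a) * (E c c * deriv γ (s (p 0)) c)
          * lift γ s b p :=
      Finset.sum_congr rfl fun a _ => Finset.sum_congr rfl fun c _ => by
        simp only [lift, hv]; ring
    simp only [e3, e4]
    exact hbd
  simp only [hq] at lq
  simp only [hm] at lm
  have lim := lq.abs.add (lm.const_mul κ)
  simp only [abs_zero, mul_zero, add_zero] at lim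
  filter_upwards [lim.eventually (gt_mem_nhds hε)] with n hn
  have h3 := hle n
  have h4 := abs_sub_abs_le_abs_sub (chargePairing γ s (J n) b)
    (∑ a, pairing γ s (fun p => J n p a) fun t => v t a * b t)
  rw [abs_sub_comm] at h4
  linarith

end IsConcentrating

/-- Tracked charged curves obey the Lorentz force law. -/
theorem charged_tracking_lorentz_force (F : Vec4 → Mat4)
    (hFs : ∀ a b : Fin 4, ContDiff ℝ (⊤ : ℕ∞) fun p => F p a b)
    (hFa : ∀ p, (F p)ᵀ = -(F p))
    (γ : ℝ → Vec4) (hγ : ContDiff ℝ (⊤ : ℕ∞) γ)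
    (hunit : ∀ t : ℝ, mink (deriv γ t) (deriv γ t) = 1)
    (htl : ∀ t : ℝ, FutureTimelike (deriv γ t))
    (κ : ℝ) (hκ : 0 ≤ κ)
    (C : Set ((Vec4 → Mat4) × (Vec4 → Vec4)))
    (hC : ∀ TJ ∈ C, SmoothMatField TJ.1 ∧ SymValued TJ.1 ∧ (∀ p, DEC (TJ.1 p)) ∧
      (∀ a : Fin 4, ContDiff ℝ (⊤ : ℕ∞) fun p => TJ.2 p a) ∧
      (∀ p, ∑ a, pd a (fun q => TJ.2 q a) p = 0) ∧
      (∀ p (a : Fin 4), ∑ b, pd b (fun q => TJ.1 q a b) p = ∑ b, (E * F p) a b * TJ.2 p b) ∧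
      (∀ p (t : Vec4), UnitTimelike t →
        |∑ a, TJ.2 p a * t a| ≤ κ * ∑ a, ∑ b, TJ.1 p a b * t a * t b))
    (htr : Tracks (Prod.fst '' C) γ) :
    ∃ κ' : ℝ, |κ'| ≤ κ ∧
      ∀ (t : ℝ) (a : Fin 4),
        deriv (deriv γ) t a = κ' * ∑ b, (E * F (γ t)) a b * deriv γ t b := by
  have hC' : ∀ TJ ∈ C, IsChargedMatter F κ TJ.1 TJ.2 := fun TJ h => by
    obtain ⟨h1, h2, h3, h4, h5, h6, h7⟩ := hC TJ h
    exact ⟨h1, h2, h3, h4, h5, h6, h7⟩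
  obtain ⟨s, W⟩ := exists_isWorldline hγ hunit htl
  let B : ContDiffBump (0 : ℝ) := ⟨1, 2, one_pos, one_lt_two⟩
  let b : ℝ → ℝ := fun t => B t
  have hb : IsTest b := ⟨B.contDiff, B.hasCompactSupport⟩
  have hb0 : ∀ t, 0 ≤ b t := fun t => B.nonneg
  have hb1 : ∀ t, |t| ≤ 1 → b t = 1 := fun t ht =>
    B.one_of_mem_closedBall (by simpa [B] using ht)
  have hbint : ∫ t, b t ≠ 0 := B.integral_pos.ne'
  obtain ⟨T, J, H⟩ := exists_isConcentrating W hb (by rw [hb1 0 (by simp)]; exact one_pos)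
    hC' htr hb0
  have h := H.exists_massBoundedOn W (rate_pos W htl) hκ (fun a c => (hFs a c).continuous)
    hb hb0 hb1
  have hf : ∀ a, ContDiff ℝ (⊤ : ℕ∞) fun t => ∑ c, (E * F (γ t)) a c * deriv γ t c := fun a =>
    ContDiff.sum fun c _ => (IsConcentrating.contDiff_force W hFs a c).mul (W.smooth_velocity c)
  obtain ⟨κ', hκ', hlaw⟩ := exists_charge_of_limit_relations
    (u := fun a t => deriv γ t a) (f := fun a t => ∑ c, (E * F (γ t)) a c * deriv γ t c)
    (m := fun n => massPairing γ s (T n)) (q := fun n => chargePairing γ s (J n))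
    W.smooth_velocity hf hb hbint
    (fun n φ ψ hφ hψ => W.massPairing_add ((H.matter n).continuous_entry 0 0) hφ hψ)
    (fun n c φ => massPairing_const_mul ..)
    (fun n φ ψ hφ hψ => W.chargePairing_add ((H.matter n).continuous_current 0) hφ hψ)
    (fun n c φ => chargePairing_const_mul ..)
    (fun φ hφ => H.tendsto_massPairing_deriv W hκ h hFs hFa hunit hφ)
    (fun φ hφ => H.tendsto_chargePairing_deriv W hκ h hφ)
    (fun a φ hφ => H.tendsto_force W hκ h hFs a hφ)
    H.normalized
    (fun ε hε => H.eventually_abs_chargePairing_le W hκ h hFs hunit htl hb hb0 hε)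
  refine ⟨κ', hκ', fun t a => ?_⟩
  rw [← hlaw t a, deriv_apply_of_contDiff (contDiff_pi.2 W.smooth_velocity)]
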